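/- arXiv:1203.6855 — 3 statements merged into one kernel-verified Lean document; each statement's English description precedes it below -/
import Mathlib

section
/- Let X be a real Banach space and M a closed linear subspace of X. Then X∖M is lineable if and only if X∖M is spaceable. -/
open Filter Topology

/-- A bounded linear operator `T` on `C(K, ℝ)` is a *weak multiplier* if for every bounded
pairwise disjoint sequence `(e_n)` in `C(K, ℝ)` and every sequence `(x_n)` in `K` with
`e_n (x_n) = 0` for all `n`, one has `T (e_n) (x_n) → 0`. -/
def IsWeakMultiplier {K : Type*} [TopologicalSpace K] [CompactSpace K]
    (T : C(K, ℝ) →L[ℝ] C(K, ℝ)) : Prop :=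
  ∀ (e : ℕ → C(K, ℝ)) (x : ℕ → K),
    (∃ M : ℝ, ∀ n, ‖e n‖ ≤ M) →
    (∀ i j, i ≠ j → e i * e j = 0) →
    (∀ n, (e n) (x n) = 0) →
    Filter.Tendsto (fun n => (T (e n)) (x n)) Filter.atTop (nhds 0)

/-- An operator on `C(K, ℝ)` is *weakly compact* if the image of the closed unit ball has
compact closure in the weak topology. -/
def IsWeaklyCompactOp {K : Type*} [TopologicalSpace K] [CompactSpace K]
    (S : C(K, ℝ) →L[ℝ] C(K, ℝ)) : Prop :=
  IsCompact (closure ((toWeakSpace ℝ C(K, ℝ)) '' (S '' Metric.closedBall 0 1)))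

/-- An operator on `C(K, ℝ)` is a *weak multiplication* if it has the form `g•I + S` with
`g ∈ C(K, ℝ)` and `S` weakly compact. -/
def IsWeakMultiplication {K : Type*} [TopologicalSpace K] [CompactSpace K]
    (T : C(K, ℝ) →L[ℝ] C(K, ℝ)) : Prop :=
  ∃ (g : C(K, ℝ)) (S : C(K, ℝ) →L[ℝ] C(K, ℝ)),
    IsWeaklyCompactOp S ∧ T = ContinuousLinearMap.mul ℝ C(K, ℝ) g + S

/-- A subset `A` of a real vector space is *lineable* if `A ∪ {0}` contains an
infinite-dimensional subspace. -/
def Lineable {X : Type*} [AddCommGroup X] [Module ℝ X] (A : Set X) : Prop :=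
  ∃ W : Submodule ℝ X, ¬ FiniteDimensional ℝ W ∧ (W : Set X) ⊆ A ∪ {0}

/-- A subset `A` of a real normed space is *spaceable* if `A ∪ {0}` contains a closed
infinite-dimensional subspace. -/
def Spaceable {X : Type*} [NormedAddCommGroup X] [NormedSpace ℝ X] (A : Set X) : Prop :=
  ∃ W : Submodule ℝ X, IsClosed (W : Set X) ∧ ¬ FiniteDimensional ℝ W ∧ (W : Set X) ⊆ A ∪ {0}

/-- Hahn-Banach: a functional vanishing on a closed subspace and nonzero at an outside point. -/
lemma exists_functional_aux {X : Type*} [NormedAddCommGroup X] [NormedSpace ℝ X]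
    (M : Submodule ℝ X) (hM : IsClosed (M : Set X)) (x : X) (hx : x ∉ M) :
    ∃ f : X →L[ℝ] ℝ, (∀ m ∈ M, f m = 0) ∧ f x ≠ 0 := by
  obtain ⟨f, u, h1, h2⟩ := geometric_hahn_banach_closed_point (M.convex) hM hx
  have hu : 0 < u := by simpa using h1 0 M.zero_mem
  refine ⟨f, fun m hm => ?_, by linarith [hu, h2] |> fun h : 0 < f x => h.ne'⟩
  by_contra hne
  have := h1 ((u / f m) • m) (M.smul_mem _ hm)
  rw [map_smul, smul_eq_mul, div_mul_cancel₀ _ hne] at this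
  exact lt_irrefl _ this

/-- Triangular system: `f n` vanishes on `M`, `f n (x n) ≠ 0`, `f m (x n) = 0` for `m < n`. -/
lemma exists_triangular_aux {X : Type*} [NormedAddCommGroup X] [NormedSpace ℝ X]
    (M : Submodule ℝ X) (hM : IsClosed (M : Set X)) (W : Submodule ℝ X)
    (hW : ¬ FiniteDimensional ℝ W) (hWM : (W : Set X) ⊆ (M : Set X)ᶜ ∪ {0}) :
    ∃ (x : ℕ → X) (f : ℕ → X →L[ℝ] ℝ), (∀ n, ∀ m ∈ M, f n m = 0) ∧ (∀ n, f n (x n) ≠ 0) ∧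
      ∀ m n, m < n → f m (x n) = 0 := by
  obtain ⟨p, hp, hr⟩ := exists_seq_of_forall_finset_exists
    (fun p : X × (X →L[ℝ] ℝ) => (∀ m ∈ M, p.2 m = 0) ∧ p.2 p.1 ≠ 0)
    (fun p q => p.2 q.1 = 0) (by
      intro s _
      let L : W →ₗ[ℝ] (s → ℝ) := LinearMap.pi fun i => (i.1.2 : X →ₗ[ℝ] ℝ) ∘ₗ W.subtype
      have hL : ¬ Function.Injective L := fun h =>
        hW (FiniteDimensional.of_injective L h)
      rw [← LinearMap.ker_eq_bot, Submodule.eq_bot_iff] at hL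
      push Not at hL
      obtain ⟨w, hw, hw0⟩ := hL
      have hwM : (w : X) ∉ M := by
        rcases hWM w.2 with h | h
        · exact h
        · exact absurd (Subtype.ext (Set.mem_singleton_iff.1 h)) hw0
      obtain ⟨f, hf, hfx⟩ := exists_functional_aux M hM w hwM
      refine ⟨(w, f), ⟨hf, hfx⟩, fun q hq => ?_⟩
      exact congrFun (LinearMap.mem_ker.1 hw) ⟨q, hq⟩)
  exact ⟨fun n => (p n).1, fun n => (p n).2, fun n => (hp n).1, fun n => (hp n).2, hr⟩

/-- A separable normed space has a separating sequence of functionals in the unit ball. -/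
lemma exists_separating_aux (Z : Type*) [NormedAddCommGroup Z] [NormedSpace ℝ Z]
    [TopologicalSpace.SeparableSpace Z] :
    ∃ g : ℕ → Z →L[ℝ] ℝ, (∀ n, ‖g n‖ ≤ 1) ∧ ∀ z, (∀ n, g n z = 0) → z = 0 := by
  choose g hg1 hg2 using fun z : Z => exists_dual_vector'' ℝ z
  refine ⟨fun n => g (TopologicalSpace.denseSeq Z n), fun n => hg1 _, fun z hz => ?_⟩
  by_contra hne
  have hpos : 0 < ‖z‖ := norm_pos_iff.2 hne
  obtain ⟨n, hn⟩ := (TopologicalSpace.denseRange_denseSeq Z).exists_dist_lt z (half_pos hpos)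
  set d := TopologicalSpace.denseSeq Z n
  have h0 : g d z = 0 := hz n
  have h1 : ‖d‖ ≤ ‖d - z‖ := by
    have h3 : g d (d - z) = ‖d‖ := by rw [map_sub, h0, hg2]; simp
    calc ‖d‖ = g d (d - z) := h3.symm
      _ ≤ ‖g d (d - z)‖ := le_abs_self _
      _ ≤ 1 * ‖d - z‖ := (g d).le_of_opNorm_le (hg1 d) _
      _ = _ := one_mul _
  rw [dist_eq_norm] at hn
  have h4 : ‖d - z‖ = ‖z - d‖ := norm_sub_rev _ _
  have h5 : ‖z‖ ≤ ‖z - d‖ + ‖d‖ := by simpa using norm_add_le (z - d) d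
  linarith

/-- An infinite-dimensional closed subspace contains a separable one. -/
lemma exists_separable_aux {X : Type*} [NormedAddCommGroup X] [NormedSpace ℝ X]
    (M : Submodule ℝ X) (hM : IsClosed (M : Set X)) (hinf : ¬ FiniteDimensional ℝ M) :
    ∃ Z : Submodule ℝ X, Z ≤ M ∧ IsClosed (Z : Set X) ∧ ¬ FiniteDimensional ℝ Z ∧
      TopologicalSpace.SeparableSpace Z := by
  let b := Module.Basis.ofVectorSpace ℝ M
  have hi : Infinite (Module.Basis.ofVectorSpaceIndex ℝ M) := by
    by_contra h
    rw [not_infinite_iff_finite] at h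
    exact hinf (Module.Finite.of_basis b)
  let e := Infinite.natEmbedding (Module.Basis.ofVectorSpaceIndex ℝ M)
  let v : ℕ → X := fun n => (b (e n) : X)
  have hv : LinearIndependent ℝ v :=
    (b.linearIndependent.comp e e.injective).map' M.subtype (Submodule.ker_subtype M)
  let S := Submodule.span ℝ (Set.range v)
  have hS : S ≤ M := by
    rw [Submodule.span_le]
    rintro _ ⟨n, rfl⟩
    exact (b (e n)).2
  refine ⟨S.topologicalClosure, S.topologicalClosure_minimal hS hM,
    S.isClosed_topologicalClosure, ?_, ?_⟩
  · intro h
    have h1 : LinearIndependent ℝ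
        (fun n => (⟨v n, S.le_topologicalClosure (Submodule.subset_span ⟨n, rfl⟩)⟩ :
          S.topologicalClosure)) :=
      LinearIndependent.of_comp S.topologicalClosure.subtype hv
    have := h1.finite
    exact not_finite ℕ
  · have h1 : TopologicalSpace.IsSeparable (S : Set X) :=
      (Set.countable_range v).isSeparable.span
    have h2 : TopologicalSpace.IsSeparable (S.topologicalClosure : Set X) := h1.closure
    exact h2.separableSpace

/-- The nuclear operator `z ↦ ∑ c n * g n z • x n` with small positive weights `c n`. -/
lemma exists_operator_aux {X Z : Type*} [NormedAddCommGroup X] [NormedSpace ℝ X] [CompleteSpace X]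
    [NormedAddCommGroup Z] [NormedSpace ℝ Z] (x : ℕ → X) (g : ℕ → Z →L[ℝ] ℝ)
    (hg1 : ∀ n, ‖g n‖ ≤ 1) :
    ∃ (c : ℕ → ℝ) (T : Z →L[ℝ] X), (∀ n, 0 < c n) ∧ ‖T‖ ≤ 1 / 2 ∧
      ∀ z, HasSum (fun n => (c n * g n z) • x n) (T z) := by
  let c : ℕ → ℝ := fun n => (1 / 4) * (1 / 2) ^ n / (‖x n‖ + 1)
  have hc : ∀ n, 0 < c n := fun n => by positivity
  let t : ℕ → Z →L[ℝ] X := fun n => c n • (g n).smulRight (x n)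
  have ht : ∀ n, ‖t n‖ ≤ (1 / 4) * (1 / 2) ^ n := by
    intro n
    have h1 : ‖t n‖ = c n * (‖g n‖ * ‖x n‖) := by
      change ‖c n • (g n).smulRight (x n)‖ = _
      rw [norm_smul, ContinuousLinearMap.norm_smulRight_apply, Real.norm_eq_abs,
        abs_of_pos (hc n)]
    have h2 : ‖g n‖ * ‖x n‖ ≤ ‖x n‖ + 1 := by
      nlinarith [hg1 n, norm_nonneg (x n), norm_nonneg (g n)]
    rw [h1]
    calc c n * (‖g n‖ * ‖x n‖) ≤ c n * (‖x n‖ + 1) := mul_le_mul_of_nonneg_left h2 (hc n).le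
      _ = (1 / 4) * (1 / 2) ^ n := by
        have : ‖x n‖ + 1 ≠ 0 := by positivity
        exact div_mul_cancel₀ _ this
  have hgeo : HasSum (fun n : ℕ => (1 / 4 : ℝ) * (1 / 2) ^ n) (1 / 2) := by
    have h := hasSum_geometric_two.mul_left (1 / 4 : ℝ)
    rwa [show (1 / 4 : ℝ) * 2 = 1 / 2 by norm_num] at h
  have hsum : Summable t := Summable.of_norm_bounded hgeo.summable ht
  refine ⟨c, ∑' n, t n, hc, tsum_of_norm_bounded hgeo ht, fun z => ?_⟩
  have h1 := (ContinuousLinearMap.apply ℝ X z).hasSum hsum.hasSum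
  have h2 : (fun n => (c n * g n z) • x n) =
      fun n => (ContinuousLinearMap.apply ℝ X z) (t n) := by
    funext n
    simp [t, mul_smul]
  rw [h2]
  exact h1

/-- For a closed subspace `M` of a real Banach space `X`, the complement `X ∖ M` is lineable
iff it is spaceable. -/
theorem lineable_compl_iff_spaceable_compl
    {X : Type*} [NormedAddCommGroup X] [NormedSpace ℝ X] [CompleteSpace X]
    (M : Submodule ℝ X) (hM : IsClosed (M : Set X)) :
    Lineable ((M : Set X)ᶜ) ↔ Spaceable ((M : Set X)ᶜ) := by
  constructor
  swap
  · rintro ⟨W, _, h1, h2⟩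
    exact ⟨W, h1, h2⟩
  rintro ⟨W, hW, hWM⟩
  by_cases hfin : FiniteDimensional ℝ M
  · obtain ⟨C, hC, hMC⟩ :=
      (Submodule.ClosedComplemented.of_finiteDimensional M).exists_isClosed_isCompl
    refine ⟨C, hC, fun hCfin => hW ?_, fun c hc => ?_⟩
    · have h1 : FiniteDimensional ℝ (M ⊔ C : Submodule ℝ X) := inferInstance
      rw [hMC.sup_eq_top] at h1
      exact Submodule.finiteDimensional_of_le (le_top : W ≤ ⊤)
    · by_cases hcM : c ∈ M
      · exact Or.inr (Submodule.disjoint_def.1 hMC.disjoint c hcM hc)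
      · exact Or.inl hcM
  obtain ⟨x, f, hf0, hfx, hfm⟩ := exists_triangular_aux M hM W hW hWM
  obtain ⟨Z, hZM, hZc, hZinf, hZs⟩ := exists_separable_aux M hM hfin
  obtain ⟨g, hg1, hg⟩ := exists_separating_aux Z
  have : CompleteSpace Z := hZc.completeSpace_coe
  obtain ⟨c, T, hc, hT, hTs⟩ := exists_operator_aux x g hg1
  have hTz : ∀ (k : ℕ) (z : Z), HasSum (fun n => c n * g n z * f k (x n)) (f k (T z)) := by
    intro k z
    have h2 := (f k).hasSum (hTs z)
    simpa using h2
  have hinj : ∀ z : Z, T z ∈ M → z = 0 := by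
    intro z hz
    apply hg
    intro k
    induction k using Nat.strong_induction_on with
    | _ k ih =>
      have h1 := hTz k z
      rw [hf0 k _ hz] at h1
      have h2 := hasSum_single (f := fun n => c n * g n z * f k (x n)) k (by
        intro n hn
        rcases lt_or_gt_of_ne hn with h | h
        · simp [ih n h]
        · simp [hfm k n h])
      have h3 := h2.unique h1
      simpa [(hc k).ne', hfx k] using h3
  let A : Z →L[ℝ] X := Z.subtypeL + T
  have hA : ∀ z : Z, ‖z‖ ≤ (2 : NNReal) * ‖A z‖ := by
    intro z
    have h1 : ‖T z‖ ≤ 1 / 2 * ‖z‖ := T.le_of_opNorm_le hT z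
    have h2 : ‖(z : X)‖ ≤ ‖A z‖ + ‖T z‖ := by
      have : (z : X) = A z - T z := by simp [A]
      rw [this]
      exact norm_sub_le _ _
    have h3 : ‖(z : X)‖ = ‖z‖ := rfl
    push_cast
    linarith
  have hAl := AddMonoidHomClass.antilipschitz_of_bound A hA
  refine ⟨LinearMap.range (A : Z →ₗ[ℝ] X), ?_, ?_, ?_⟩
  · have := hAl.isClosed_range A.uniformContinuous
    rw [LinearMap.coe_range]
    exact this
  · intro h
    exact hZinf (LinearEquiv.ofInjective (A : Z →ₗ[ℝ] X) hAl.injective).symm.finiteDimensional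
  · rintro _ ⟨z, rfl⟩
    by_cases h : A z ∈ M
    · right
      have h1 : T z ∈ M := by
        have h2 : T z = A z - z := by simp [A]
        rw [h2]
        exact M.sub_mem h (hZM z.2)
      rw [hinj z h1]
      simp
    · exact Or.inl h
end

section
/- Let K be a compact Hausdorff space. If there exists a bounded linear operator on C(K) which is not a weak multiplier, then the quotient of L(C(K)) by the closed subspace M(C(K)) of weak multipliers is infinite-dimensional. -/
open Filter Topology

/-- The subspace of `L(C(K,ℝ))` consisting of the weak multipliers. -/
noncomputable def weakMultipliers (K : Type*) [TopologicalSpace K] [CompactSpace K] :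
    Submodule ℝ (C(K, ℝ) →L[ℝ] C(K, ℝ)) where
  carrier := {T | IsWeakMultiplier T}
  add_mem' := by
    intro T S hT hS e x hb hd hz
    have h := (hT e x hb hd hz).add (hS e x hb hd hz)
    simpa using h
  zero_mem' := by
    intro e x hb hd hz
    simp
  smul_mem' := by
    intro c T hT e x hb hd hz
    have h := (hT e x hb hd hz).const_mul c
    simpa using h


/-- Finite-dimensional quotients give convergent subsequences of functionals. -/
lemma exists_subseq_of_finiteDimensional_quotient {V : Type*} [AddCommGroup V] [Module ℝ V]
    (W : Submodule ℝ V) [FiniteDimensional ℝ (V ⧸ W)] (p : ℕ → V →ₗ[ℝ] ℝ)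
    (hp : ∀ v ∈ W, Tendsto (fun n => p n v) atTop (𝓝 0))
    (hb : ∀ v, ∃ C, ∀ n, |p n v| ≤ C) :
    ∃ φ : ℕ → ℕ, StrictMono φ ∧ ∀ v, ∃ l, Tendsto (fun n => p (φ n) v) atTop (𝓝 l) := by
  let b := Module.finBasis ℝ (V ⧸ W)
  choose v hv using fun i => W.mkQ_surjective (b i)
  choose C hC using fun i => hb (v i)
  have hcomp : IsCompact (Set.pi Set.univ (fun i => Set.Icc (-(C i)) (C i))) :=
    isCompact_univ_pi (fun i => isCompact_Icc)
  obtain ⟨a, -, φ, hφ, ha⟩ := hcomp.tendsto_subseq (x := fun n i => p n (v i))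
    (fun n i _ => abs_le.mp (hC i n))
  refine ⟨φ, hφ, fun u => ?_⟩
  set c := b.repr (W.mkQ u) with hc
  have hw : u - ∑ i, c i • v i ∈ W := by
    rw [← Submodule.Quotient.mk_eq_zero W, ← Submodule.mkQ_apply, map_sub, map_sum]
    simp only [map_smul, hv]
    rw [hc, b.sum_repr, sub_self]
  have h1 := (hp _ hw).comp hφ.tendsto_atTop
  have h2 : Tendsto (fun n => ∑ i, c i * p (φ n) (v i)) atTop (𝓝 (∑ i, c i * a i)) :=
    tendsto_finsetSum _ (fun i _ => ((tendsto_pi_nhds.mp ha) i).const_mul (c i))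
  refine ⟨_, (h1.add h2).congr (fun n => ?_)⟩
  simp

section
variable {K : Type*} [TopologicalSpace K] [CompactSpace K]

lemma norm_sum_disjoint_le (e : ℕ → C(K, ℝ)) (M : ℝ) (hM : ∀ n, ‖e n‖ ≤ M)
    (hd : ∀ i j, i ≠ j → e i * e j = 0) (s : Finset ℕ) (t : ℕ → ℝ) (C : ℝ) (hC : 0 ≤ C)
    (ht : ∀ n ∈ s, |t n| ≤ C) : ‖∑ n ∈ s, t n • e n‖ ≤ C * M := by
  have hM0 : 0 ≤ M := (norm_nonneg _).trans (hM 0)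
  rw [ContinuousMap.norm_le _ (by positivity)]
  intro z
  rw [ContinuousMap.sum_apply]
  by_cases h : ∃ n ∈ s, e n z ≠ 0
  · obtain ⟨n, hn, hz⟩ := h
    rw [Finset.sum_eq_single n]
    · have h1 := ht n hn
      have h2 := ((e n).norm_coe_le_norm z).trans (hM n)
      simp only [ContinuousMap.smul_apply, smul_eq_mul, norm_mul]
      exact mul_le_mul h1 h2 (norm_nonneg _) hC
    · intro m _ hmn
      have := congrArg (fun f : C(K, ℝ) => f z) (hd m n hmn)
      simp only [ContinuousMap.mul_apply, ContinuousMap.zero_apply] at this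
      simp [(mul_eq_zero.mp this).resolve_right hz]
    · intro h; exact absurd hn h
  · push Not at h
    rw [Finset.sum_eq_zero (fun n hn => by simp [h n hn])]
    simp; positivity

lemma tendsto_functional_disjoint (e : ℕ → C(K, ℝ)) (M : ℝ) (hM : ∀ n, ‖e n‖ ≤ M)
    (hd : ∀ i j, i ≠ j → e i * e j = 0) (T : C(K, ℝ) →L[ℝ] C(K, ℝ)) (x : K) :
    Tendsto (fun n => T (e n) x) atTop (𝓝 0) := by
  have hs : Summable (fun n => |T (e n) x|) := by
    refine summable_of_sum_le (c := ‖T‖ * (1 * M)) (fun n => abs_nonneg _) (fun s => ?_)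
    have h := norm_sum_disjoint_le e M hM hd s (fun n => SignType.sign (T (e n) x)) 1 zero_le_one
      (fun n _ => by rcases lt_trichotomy (T (e n) x) 0 with h | h | h <;> simp [h])
    have h2 := (T.le_opNorm _).trans (mul_le_mul_of_nonneg_left h (norm_nonneg T))
    refine le_trans ?_ h2
    refine le_trans (le_of_eq ?_) (((T _).norm_coe_le_norm x).trans' (le_abs_self _))
    simp only [map_sum, map_smul, ContinuousMap.sum_apply, ContinuousMap.smul_apply, smul_eq_mul]
    exact Finset.sum_congr rfl (fun n _ => (sign_mul_self _).symm)
  exact (tendsto_zero_iff_abs_tendsto_zero _).mpr hs.tendsto_atTop_zero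

lemma summable_disjoint (e : ℕ → C(K, ℝ)) (M : ℝ) (hM : ∀ n, ‖e n‖ ≤ M)
    (hd : ∀ i j, i ≠ j → e i * e j = 0) (t : ℕ → ℝ) (ht : Tendsto t atTop (𝓝 0)) :
    Summable (fun n => t n • e n) := by
  have hM0 : 0 ≤ M := (norm_nonneg _).trans (hM 0)
  rw [summable_iff_vanishing_norm]
  intro ε hε
  obtain ⟨N, hN⟩ := (Metric.tendsto_atTop.mp ht) (ε / (M + 1)) (by positivity)
  refine ⟨Finset.range N, fun s hs => ?_⟩
  refine (norm_sum_disjoint_le e M hM hd s t (ε / (M + 1)) (by positivity) ?_).trans_lt ?_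
  · intro n hn
    have : N ≤ n := by
      by_contra hlt
      exact Finset.disjoint_left.mp hs hn (Finset.mem_range.mpr (not_le.mp hlt))
    simpa using (hN n this).le
  · rw [div_mul_eq_mul_div, div_lt_iff₀ (by positivity)]
    nlinarith

/-- The operator `f ↦ ∑ (q n f) • e n`, for disjoint `e` and a weakly null sequence `q`. -/
lemma exists_operator (e : ℕ → C(K, ℝ)) (M : ℝ) (hM : ∀ n, ‖e n‖ ≤ M)
    (hd : ∀ i j, i ≠ j → e i * e j = 0) (q : ℕ → C(K, ℝ) →ₗ[ℝ] ℝ) (B : ℝ) (hB : 0 ≤ B)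
    (hq : ∀ n f, |q n f| ≤ B * ‖f‖) (hq0 : ∀ f, Tendsto (fun n => q n f) atTop (𝓝 0)) :
    ∃ S : C(K, ℝ) →L[ℝ] C(K, ℝ), ∀ f n z, e n z ≠ 0 → S f z = q n f * e n z := by
  have hs := fun f => summable_disjoint e M hM hd (fun n => q n f) (hq0 f)
  let L : C(K, ℝ) →ₗ[ℝ] C(K, ℝ) :=
    { toFun := fun f => ∑' n, q n f • e n
      map_add' := fun f g => by
        rw [← (hs f).tsum_add (hs g)]
        simp [add_smul]
      map_smul' := fun c f => by
        rw [RingHom.id_apply, ← (hs f).tsum_const_smul c]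
        simp [mul_smul] }
  have hL : ∀ f, ‖L f‖ ≤ (B * M) * ‖f‖ := by
    intro f
    refine le_of_tendsto (hs f).hasSum.norm (Eventually.of_forall fun s => ?_)
    refine (norm_sum_disjoint_le e M hM hd s _ (B * ‖f‖) (by positivity)
      (fun n _ => hq n f)).trans (le_of_eq (by ring))
  refine ⟨L.mkContinuous _ hL, fun f n z hz => ?_⟩
  rw [LinearMap.mkContinuous_apply]
  change (∑' n, q n f • e n : C(K, ℝ)) z = _
  rw [← ContinuousMap.tsum_apply (hs f), tsum_eq_single n]
  · simp
  · intro m hmn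
    have := congrArg (fun f : C(K, ℝ) => f z) (hd m n hmn)
    simp only [ContinuousMap.mul_apply, ContinuousMap.zero_apply] at this
    simp [(mul_eq_zero.mp this).resolve_right hz]

/-- Subsequence extraction for evaluation functionals. -/
lemma exists_subseq_eval [FiniteDimensional ℝ ((C(K, ℝ) →L[ℝ] C(K, ℝ)) ⧸ weakMultipliers K)]
    (e : ℕ → C(K, ℝ)) (x : ℕ → K) (M : ℝ) (hM : ∀ n, ‖e n‖ ≤ M)
    (hd : ∀ i j, i ≠ j → e i * e j = 0) (hz : ∀ n, e n (x n) = 0) :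
    ∃ φ : ℕ → ℕ, StrictMono φ ∧ ∀ S : C(K, ℝ) →L[ℝ] C(K, ℝ),
      ∃ l, Tendsto (fun n => S (e (φ n)) (x (φ n))) atTop (𝓝 l) := by
  let p : ℕ → (C(K, ℝ) →L[ℝ] C(K, ℝ)) →ₗ[ℝ] ℝ := fun n =>
    { toFun := fun S => S (e n) (x n)
      map_add' := fun S R => by simp
      map_smul' := fun c S => by simp }
  refine exists_subseq_of_finiteDimensional_quotient (weakMultipliers K) p ?_ ?_
  · intro S hS
    exact hS e x ⟨M, hM⟩ hd hz
  · intro S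
    refine ⟨‖S‖ * M, fun n => ?_⟩
    exact ((S (e n)).norm_coe_le_norm (x n)).trans
      ((S.le_opNorm _).trans (mul_le_mul_of_nonneg_left (hM n) (norm_nonneg _)))

end

theorem quotient_by_weakMultipliers_infiniteDimensional
    {K : Type*} [TopologicalSpace K] [CompactSpace K] [T2Space K]
    (h : ∃ T : C(K, ℝ) →L[ℝ] C(K, ℝ), ¬ IsWeakMultiplier T) :
    ¬ FiniteDimensional ℝ ((C(K, ℝ) →L[ℝ] C(K, ℝ)) ⧸ weakMultipliers K) := by
  intro hfin
  obtain ⟨T, hT⟩ := h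
  simp only [IsWeakMultiplier, not_forall] at hT
  obtain ⟨e₀, x₀, ⟨M, hM₀⟩, hd₀, hz₀, hT⟩ := hT
  -- a subsequence bounded away from zero
  have hfreq : ∃ ε > 0, ∃ᶠ n in atTop, ε ≤ |T (e₀ n) (x₀ n)| := by
    by_contra hcon
    push Not at hcon
    apply hT
    rw [Metric.tendsto_nhds]
    intro ε hε
    filter_upwards [hcon ε hε] with n hn
    simpa using hn
  obtain ⟨ε, hε, hfreq⟩ := hfreq
  obtain ⟨ψ, hψ, hψT⟩ := extraction_of_frequently_atTop hfreq
  obtain ⟨φ, hφ, hconv⟩ := exists_subseq_eval (fun n => e₀ (ψ n)) (fun n => x₀ (ψ n)) M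
    (fun n => hM₀ _) (fun i j hij => hd₀ _ _ (hψ.injective.ne hij)) (fun n => hz₀ _)
  -- pass to the subsequence
  obtain ⟨e, he⟩ : ∃ e : ℕ → C(K, ℝ), e = fun n => e₀ (ψ (φ n)) := ⟨_, rfl⟩
  obtain ⟨x, hx⟩ : ∃ x : ℕ → K, x = fun n => x₀ (ψ (φ n)) := ⟨_, rfl⟩
  have hM : ∀ n, ‖e n‖ ≤ M := fun n => by rw [he]; exact hM₀ _
  have hd : ∀ i j, i ≠ j → e i * e j = 0 := fun i j hij => by
    rw [he]; exact hd₀ _ _ (hψ.injective.ne (hφ.injective.ne hij))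
  have hTe : ∀ n, ε ≤ |T (e n) (x n)| := fun n => by rw [he, hx]; exact hψT _
  replace hconv : ∀ S : C(K, ℝ) →L[ℝ] C(K, ℝ), ∃ l,
      Tendsto (fun n => S (e n) (x n)) atTop (𝓝 l) := fun S => by rw [he, hx]; exact hconv S
  clear hψT hfreq hT hz₀ hd₀ hM₀
  have hfx : ∀ f : C(K, ℝ), ∃ l, Tendsto (fun n => f (x n)) atTop (𝓝 l) := by
    intro f
    obtain ⟨l₁, h₁⟩ := hconv T
    obtain ⟨l₂, h₂⟩ := hconv ((ContinuousLinearMap.mul ℝ C(K, ℝ) f).comp T)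
    have hl : l₁ ≠ 0 := by
      have := ge_of_tendsto' h₁.abs hTe
      exact abs_pos.mp (hε.trans_le this)
    refine ⟨_, (h₂.div h₁ hl).congr fun n => ?_⟩
    have : T (e n) (x n) ≠ 0 := abs_pos.mp (hε.trans_le (hTe n))
    simp [this]
  obtain ⟨y, hy⟩ : ∃ y : K, ∀ f : C(K, ℝ), Tendsto (fun n => f (x n)) atTop (𝓝 (f y)) := by
    obtain ⟨y, -, hy⟩ := isCompact_univ.ultrafilter_le_nhds ((hyperfilter ℕ).map x) (by simp)
    refine ⟨y, fun f => ?_⟩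
    obtain ⟨l, hl⟩ := hfx f
    have hy' : Tendsto x (hyperfilter ℕ : Filter ℕ) (𝓝 y) := hy
    have h1 := (f.continuous.tendsto y).comp hy'
    have h2 := hl.mono_left Nat.hyperfilter_le_atTop
    rwa [tendsto_nhds_unique h1 h2]
  -- peak points
  have hnorm : ∀ n, ε ≤ ‖T‖ * ‖e n‖ := fun n =>
    (hTe n).trans (((T (e n)).norm_coe_le_norm (x n)).trans (T.le_opNorm _))
  have hTpos : 0 < ‖T‖ := by
    rcases (norm_nonneg T).eq_or_lt with h | h
    · have := hnorm 0
      rw [← h] at this; linarith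
    · exact h
  have hne : ∀ n, ∃ z, ε / (2 * ‖T‖) ≤ |e n z| := by
    intro n
    by_contra hcon
    push Not at hcon
    have h1 : ‖e n‖ ≤ ε / (2 * ‖T‖) :=
      (ContinuousMap.norm_le _ (by positivity)).mpr (fun z => (hcon z).le)
    have h2 := (hnorm n).trans (mul_le_mul_of_nonneg_left h1 hTpos.le)
    have h3 : ‖T‖ * (ε / (2 * ‖T‖)) = ε / 2 := by field_simp
    linarith
  choose z hz using hne
  have hδ : 0 < ε / (2 * ‖T‖) := by positivity
  have hz0 : ∀ n, e n (z n) ≠ 0 := fun n => abs_pos.mp (hδ.trans_le (hz n))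
  -- second extraction
  obtain ⟨χ, hχ, hχc⟩ := exists_subseq_eval e (fun n => z (n + 1)) M hM hd (fun n => by
    have := congrArg (fun f : C(K, ℝ) => f (z (n + 1))) (hd n (n + 1) (by omega))
    simp only [ContinuousMap.mul_apply, ContinuousMap.zero_apply] at this
    exact (mul_eq_zero.mp this).resolve_right (hz0 _))
  obtain ⟨c, hc⟩ : ∃ c : ℕ → ℝ, c = fun n =>
    (T (e n) (x n) - T (e n) y) * e (n + 1) (z (n + 1)) := ⟨_, rfl⟩
  have key : ∀ a : ℕ → ℝ, (∀ n, |a n| ≤ 1) →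
      ∃ l, Tendsto (fun n => a (χ n) * c (χ n)) atTop (𝓝 l) := by
    intro a ha
    let q : ℕ → C(K, ℝ) →ₗ[ℝ] ℝ := fun n =>
      { toFun := fun f => a n * (T f (x n) - T f y)
        map_add' := fun f g => by simp; ring
        map_smul' := fun r f => by simp; ring }
    have hqb : ∀ n f, |T f (x n) - T f y| ≤ (2 * ‖T‖) * ‖f‖ := by
      intro n f
      have h1 := ((T f).norm_coe_le_norm (x n)).trans (T.le_opNorm f)
      have h2 := ((T f).norm_coe_le_norm y).trans (T.le_opNorm f)
      have h3 := norm_sub_le (T f (x n)) (T f y)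
      rw [Real.norm_eq_abs (_ - _)] at h3
      linarith
    obtain ⟨S, hS⟩ := exists_operator (fun n => e (n + 1)) M (fun n => hM _)
      (fun i j hij => hd _ _ (by omega)) q (2 * ‖T‖) (by positivity)
      (fun n f => by
        change |a n * (T f (x n) - T f y)| ≤ _
        rw [abs_mul]
        exact (mul_le_of_le_one_left (abs_nonneg _) (ha n)).trans (hqb n f))
      (fun f => by
        have h1 : Tendsto (fun n => T f (x n) - T f y) atTop (𝓝 0) := by
          simpa using (hy (T f)).sub_const (T f y)
        refine squeeze_zero_norm (fun n => ?_) (by simpa using h1.abs)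
        change |a n * (T f (x n) - T f y)| ≤ _
        rw [abs_mul]
        exact mul_le_of_le_one_left (abs_nonneg _) (ha n))
    obtain ⟨l, hl⟩ := hχc S
    refine ⟨l, hl.congr fun n => ?_⟩
    rw [hS (e (χ n)) (χ n) (z (χ n + 1)) (hz0 _), hc]
    change a _ * _ * _ = _
    ring
  -- `c` is bounded away from zero
  have hcb : ∀ᶠ n in atTop, ε / 2 * (ε / (2 * ‖T‖)) ≤ |c n| := by
    have h0 := (tendsto_functional_disjoint e M hM hd T y).abs
    rw [abs_zero] at h0
    filter_upwards [h0.eventually_lt_const (half_pos hε)] with n hn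
    rw [hc, abs_mul]
    refine mul_le_mul ?_ (hz _) hδ.le (abs_nonneg _)
    have := abs_sub_abs_le_abs_sub (T (e n) (x n)) (T (e n) y)
    linarith [hTe n]
  obtain ⟨l₁, h₁⟩ := key (fun _ => 1) (by simp)
  simp only [one_mul] at h₁
  have hcχ := hχ.tendsto_atTop.eventually hcb
  have hpos : 0 < ε / 2 * (ε / (2 * ‖T‖)) := by positivity
  have hl₁ : l₁ ≠ 0 := abs_pos.mp (hpos.trans_le (ge_of_tendsto h₁.abs hcχ))
  classical
  obtain ⟨l₂, h₂⟩ := key (fun m => if ∃ k, m = χ (2 * k) then 1 else 0)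
    (fun n => by split_ifs <;> simp)
  have h₃ := h₂.div h₁ hl₁
  have hev : Tendsto (fun k : ℕ => 2 * k) atTop atTop :=
    tendsto_id.const_mul_atTop' (by norm_num)
  have hodd : Tendsto (fun k : ℕ => 2 * k + 1) atTop atTop :=
    tendsto_atTop_mono (fun k => Nat.le_succ _) hev
  have hA := tendsto_nhds_unique (h₃.comp hev) (tendsto_const_nhds (x := (1 : ℝ)).congr' (by
    filter_upwards [hev.eventually hcχ] with k hk
    have hk0 : c (χ (2 * k)) ≠ 0 := abs_pos.mp (hpos.trans_le hk)
    have : ∃ j, χ (2 * k) = χ (2 * j) := ⟨k, rfl⟩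
    simp only [Function.comp, Pi.div_apply, if_pos this, one_mul, div_self hk0]))
  have hB := tendsto_nhds_unique (h₃.comp hodd) (tendsto_const_nhds (x := (0 : ℝ)).congr' (by
    refine Eventually.of_forall fun k => ?_
    have : ¬ ∃ j, χ (2 * k + 1) = χ (2 * j) := by
      rintro ⟨j, hj⟩
      have := hχ.injective hj
      omega
    simp only [Function.comp, Pi.div_apply, if_neg this, zero_mul, zero_div]))
  rw [hA] at hB
  exact one_ne_zero hB
end

section
/- Let K be a compact Hausdorff space. If there exists a bounded linear operator T : C(K) → C(K) which is injective and bounded below (i.e. an isomorphism onto its range) but not surjective, then the set NM(C(K)) of bounded linear operators on C(K) that are not weak multipliers is spaceable in L(C(K)). -/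
open Filter Topology

set_option linter.unusedSectionVars false
set_option linter.style.haveILetI false

section IndexPart

variable {X : Type*} [NormedAddCommGroup X] [NormedSpace ℝ X]

/-- bounded sequences with convergent image have convergent subsequences -/
def SeqProper (A : X →L[ℝ] X) : Prop :=
  ∀ f : ℕ → X, (∃ M : ℝ, ∀ n, ‖f n‖ ≤ M) → (∃ v, Tendsto (fun n => A (f n)) atTop (𝓝 v)) →
    ∃ φ : ℕ → ℕ, StrictMono φ ∧ ∃ u, Tendsto (fun n => f (φ n)) atTop (𝓝 u)

def BddBelowOp (A : X →L[ℝ] X) : Prop := ∃ c : ℝ, 0 < c ∧ ∀ f, c * ‖f‖ ≤ ‖A f‖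

def FinRankOp (F : X →L[ℝ] X) : Prop := FiniteDimensional ℝ (LinearMap.range (F : X →ₗ[ℝ] X))

theorem BddBelowOp.injective {A : X →L[ℝ] X} (h : BddBelowOp A) : Function.Injective A := by
  obtain ⟨c, hc, h⟩ := h
  rw [injective_iff_map_eq_zero]
  intro a ha
  have := h a
  rw [ha, norm_zero] at this
  have h2 : ‖a‖ ≤ 0 := by
    by_contra hh
    push Not at hh
    have := mul_pos hc hh
    linarith
  simpa using h2

theorem SeqProper.bddBelow {A : X →L[ℝ] X} (h : SeqProper A) (hi : Function.Injective A) :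
    BddBelowOp A := by
  by_contra hcon
  unfold BddBelowOp at hcon
  push Not at hcon
  have key : ∀ n : ℕ, ∃ f : X, ‖f‖ = 1 ∧ ‖A f‖ < 1 / ((n : ℝ) + 1) := by
    intro n
    obtain ⟨f, hf⟩ := hcon (1 / ((n : ℝ) + 1)) (by positivity)
    have hf0 : 0 < ‖f‖ := by
      rw [norm_pos_iff]
      rintro rfl
      simp at hf
    refine ⟨‖f‖⁻¹ • f, ?_, ?_⟩
    · rw [norm_smul, norm_inv, norm_norm, inv_mul_cancel₀ hf0.ne']
    · rw [map_smul, norm_smul, norm_inv, norm_norm, inv_mul_lt_iff₀ hf0, mul_comm]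
      exact hf
  choose f hf1 hf2 using key
  obtain ⟨φ, hφ, u, hu⟩ := h f ⟨1, fun n => (hf1 n).le⟩ ⟨0, by
    exact squeeze_zero_norm (fun n => (hf2 n).le) tendsto_one_div_add_atTop_nhds_zero_nat⟩
  have h1 : Tendsto (fun n => A (f (φ n))) atTop (𝓝 (A u)) := (A.continuous.tendsto u).comp hu
  have h2 : Tendsto (fun n => A (f (φ n))) atTop (𝓝 0) :=
    squeeze_zero_norm (fun n => (hf2 (φ n)).le)
      (tendsto_one_div_add_atTop_nhds_zero_nat.comp hφ.tendsto_atTop)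
  have h3 : A u = 0 := tendsto_nhds_unique h1 h2
  have h4 : u = 0 := hi (by rw [h3, map_zero])
  have h5 : Tendsto (fun n => ‖f (φ n)‖) atTop (𝓝 ‖u‖) := hu.norm
  simp only [hf1, h4, norm_zero] at h5
  exact one_ne_zero (tendsto_nhds_unique tendsto_const_nhds h5)

theorem FinRankOp.subseq {F : X →L[ℝ] X} (hF : FinRankOp F) (f : ℕ → X) (M : ℝ)
    (hM : ∀ n, ‖f n‖ ≤ M) :
    ∃ φ : ℕ → ℕ, StrictMono φ ∧ ∃ u, Tendsto (fun n => F (f (φ n))) atTop (𝓝 u) := by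
  haveI : FiniteDimensional ℝ (LinearMap.range (F : X →ₗ[ℝ] X)) := hF
  haveI : ProperSpace (LinearMap.range (F : X →ₗ[ℝ] X)) := FiniteDimensional.proper ℝ _
  let g : ℕ → LinearMap.range (F : X →ₗ[ℝ] X) := fun n => ⟨F (f n), ⟨f n, rfl⟩⟩
  have hg : ∀ n, g n ∈ Metric.closedBall (0 : LinearMap.range (F : X →ₗ[ℝ] X)) (‖F‖ * M) := by
    intro n
    rw [mem_closedBall_zero_iff]
    exact (F.le_opNorm _).trans (mul_le_mul_of_nonneg_left (hM n) (norm_nonneg _))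
  obtain ⟨a, -, φ, hφ, ha⟩ := (isCompact_closedBall _ _).tendsto_subseq hg
  exact ⟨φ, hφ, a, (continuous_subtype_val.tendsto a).comp ha⟩

theorem SeqProper.add_finRank {A F : X →L[ℝ] X} (h : SeqProper A) (hF : FinRankOp F) :
    SeqProper (A + F) := by
  rintro f ⟨M, hM⟩ ⟨v, hv⟩
  obtain ⟨φ, hφ, u, hu⟩ := hF.subseq f M hM
  obtain ⟨ψ, hψ, w, hw⟩ := h (fun n => f (φ n)) ⟨M, fun n => hM _⟩ ⟨v - u, by
    have := (hv.comp hφ.tendsto_atTop).sub hu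
    refine this.congr (fun n => ?_)
    simp⟩
  exact ⟨φ ∘ ψ, hφ.comp hψ, w, hw⟩

theorem SeqProper.finiteDimensional_ker {A : X →L[ℝ] X} (h : SeqProper A) :
    FiniteDimensional ℝ (LinearMap.ker (A : X →ₗ[ℝ] X)) := by
  apply FiniteDimensional.of_isCompact_closedBall ℝ (r := 1) one_pos (c := 0)
  rw [isCompact_iff_isSeqCompact]
  intro f hf
  obtain ⟨φ, hφ, u, hu⟩ := h (fun n => (f n : X)) ⟨1, fun n => by
    have := hf n
    rw [mem_closedBall_zero_iff] at this
    exact this⟩ ⟨0, by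
      refine tendsto_const_nhds.congr (fun n => ?_)
      exact (LinearMap.mem_ker.1 (f n).2).symm⟩
  have hu0 : A u = 0 := by
    have h1 : Tendsto (fun n => A (f (φ n))) atTop (𝓝 (A u)) := (A.continuous.tendsto u).comp hu
    refine tendsto_nhds_unique h1 (tendsto_const_nhds.congr (fun n => ?_))
    exact (LinearMap.mem_ker.1 (f (φ n)).2).symm
  have ht : Tendsto (f ∘ φ) atTop (𝓝 (⟨u, hu0⟩ : LinearMap.ker (A : X →ₗ[ℝ] X))) := by
    rw [tendsto_subtype_rng]
    exact hu
  exact ⟨⟨u, hu0⟩, Metric.isClosed_closedBall.mem_of_tendsto ht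
    (Eventually.of_forall fun n => hf _), φ, hφ, ht⟩

theorem exists_inj_or_surj {V W : Type*} [AddCommGroup V] [Module ℝ V] [AddCommGroup W]
    [Module ℝ W] : ∃ j : V →ₗ[ℝ] W, Function.Injective j ∨ Function.Surjective j := by
  rcases Module.Free.exists_set ℝ V with ⟨S, ⟨bV⟩⟩
  rcases Module.Free.exists_set ℝ W with ⟨S', ⟨bW⟩⟩
  rcases Function.Embedding.total S S' with ⟨⟨e, he⟩⟩ | ⟨⟨e, he⟩⟩
  · exact ⟨bV.constr ℕ (bW ∘ e), Or.inl
      (bV.injective_constr_of_linearIndependent (bW.linearIndependent.comp _ he))⟩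
  · have hi : Function.Injective (bW.constr ℕ (bV ∘ e)) :=
      bW.injective_constr_of_linearIndependent (bV.linearIndependent.comp _ he)
    obtain ⟨g, hg⟩ := LinearMap.exists_leftInverse_of_injective _ (LinearMap.ker_eq_bot.2 hi)
    exact ⟨g, Or.inr fun w => ⟨_, LinearMap.congr_fun hg w⟩⟩

theorem SeqProper.exists_finRank {A : X →L[ℝ] X} (h : SeqProper A) :
    ∃ F : X →L[ℝ] X, FinRankOp F ∧ (BddBelowOp (A + F) ∨ Function.Surjective (A + F)) := by
  let N := LinearMap.ker (A : X →ₗ[ℝ] X)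
  let R := LinearMap.range (A : X →ₗ[ℝ] X)
  haveI : FiniteDimensional ℝ N := h.finiteDimensional_ker
  obtain ⟨π, hπ⟩ := Submodule.ClosedComplemented.of_finiteDimensional N
  obtain ⟨j, hj⟩ := exists_inj_or_surj (V := N) (W := X ⧸ R)
  obtain ⟨s, hs⟩ := R.mkQ.exists_rightInverse_of_surjective R.range_mkQ
  have hs' : ∀ w, R.mkQ (s w) = w := fun w => LinearMap.congr_fun hs w
  let F : X →L[ℝ] X := (LinearMap.toContinuousLinearMap (s ∘ₗ j)) ∘L π
  have hFx : ∀ x, F x = s (j (π x)) := fun x => rfl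
  have hF : FinRankOp F := by
    have hle : LinearMap.range (F : X →ₗ[ℝ] X) ≤ LinearMap.range (s ∘ₗ j) := by
      rintro _ ⟨x, rfl⟩
      exact ⟨π x, rfl⟩
    exact Submodule.finiteDimensional_of_le hle
  have hA : ∀ x, R.mkQ (A x) = 0 := fun x => by
    rw [Submodule.mkQ_apply, Submodule.Quotient.mk_eq_zero]
    exact ⟨x, rfl⟩
  refine ⟨F, hF, ?_⟩
  rcases hj with hj | hj
  · left
    apply (h.add_finRank hF).bddBelow
    rw [injective_iff_map_eq_zero]
    intro x hx
    have h1 : R.mkQ (A x + F x) = 0 := by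
      have : A x + F x = 0 := hx
      rw [this, map_zero]
    rw [map_add, hA, zero_add, hFx, hs'] at h1
    have h2 : π x = 0 := hj (by rw [h1, map_zero])
    have h3 : A x = 0 := by
      have : A x + F x = 0 := hx
      rw [hFx, h2, map_zero, map_zero, add_zero] at this
      exact this
    have h4 := hπ ⟨x, h3⟩
    simp only at h4
    rw [h2] at h4
    exact (congrArg Subtype.val h4).symm
  · right
    intro y
    obtain ⟨n, hn⟩ := hj (R.mkQ y)
    have h1 : y - s (j n) ∈ R := by
      rw [← Submodule.Quotient.mk_eq_zero, ← Submodule.mkQ_apply, map_sub, hs', hn, sub_self]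
    obtain ⟨z, hz⟩ := h1
    have hz' : A z = y - s (j n) := hz
    refine ⟨z - π z + n, ?_⟩
    have e1 : A (n : X) = 0 := n.2
    have e2 : A (π z : X) = 0 := (π z).2
    have e3 : π (n : X) = n := hπ n
    have e4 : π ((π z : N) : X) = π z := hπ _
    rw [add_apply, hFx]
    simp only [map_add, map_sub, e1, e2, e3, e4, hz']
    simp

theorem surj_open [CompleteSpace X] {B : X →L[ℝ] X} (hB : Function.Surjective B) :
    ∃ ε : ℝ, 0 < ε ∧ ∀ E : X →L[ℝ] X, ‖E - B‖ < ε → Function.Surjective E := by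
  have hr : LinearMap.range (B : X →ₗ[ℝ] X) = ⊤ := LinearMap.range_eq_top.2 hB
  let r := B.nonlinearRightInverseOfSurjective hr
  have hpos : 0 < r.nnnorm := B.nonlinearRightInverseOfSurjective_nnnorm_pos hr
  refine ⟨(r.nnnorm : ℝ)⁻¹, by positivity, fun E hE => ?_⟩
  have happ : ApproximatesLinearOn E B Set.univ ‖E - B‖₊ := by
    intro x _ y _
    have := (E - B).le_opNorm (x - y)
    have e : ∀ a b c d : X, a - b - (c - d) = a - c - (b - d) := fun a b c d => by abel
    rw [map_sub, e]
    simpa [map_sub] using this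
  have h1 := happ.image_mem_nhds r (x := 0) univ_mem (Or.inr (by
    rw [← NNReal.coe_lt_coe]
    simpa using hE))
  rw [map_zero] at h1
  have : LinearMap.range (E : X →ₗ[ℝ] X) = ⊤ := by
    apply Submodule.eq_top_of_nonempty_interior'
    refine ⟨0, mem_interior_iff_mem_nhds.2 ?_⟩
    refine mem_of_superset h1 ?_
    rintro _ ⟨x, -, rfl⟩
    exact ⟨x, rfl⟩
  exact LinearMap.range_eq_top.1 this

theorem bddBelow_nonsurj_open [CompleteSpace X] {B : X →L[ℝ] X} (hB : BddBelowOp B)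
    (hs : ¬ Function.Surjective B) :
    ∃ ε : ℝ, 0 < ε ∧ ∀ E : X →L[ℝ] X, ‖E - B‖ < ε →
      (BddBelowOp E ∧ ¬ Function.Surjective E) := by
  obtain ⟨c, hc, h⟩ := hB
  refine ⟨c / 3, by positivity, fun E hE => ?_⟩
  have hb : ∀ f, (2 * c / 3) * ‖f‖ ≤ ‖E f‖ := by
    intro f
    have h1 := (E - B).le_opNorm f
    have h2 : ‖B f‖ ≤ ‖E f‖ + ‖(E - B) f‖ := by
      have : B f = E f - (E - B) f := by simp
      rw [this]
      exact norm_sub_le _ _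
    have h3 : ‖E - B‖ * ‖f‖ ≤ c / 3 * ‖f‖ := mul_le_mul_of_nonneg_right hE.le (norm_nonneg _)
    have := h f
    linarith
  have hEb : BddBelowOp E := ⟨2 * c / 3, by positivity, hb⟩
  refine ⟨hEb, fun hsur => hs ?_⟩
  -- use the inverse of `E` as a right inverse
  let e : X ≃ₗ[ℝ] X := LinearEquiv.ofBijective (E : X →ₗ[ℝ] X) ⟨hEb.injective, hsur⟩
  have he : ∀ x, E (e.symm x) = x := fun x => e.apply_symm_apply x
  let r : E.NonlinearRightInverse :=
    { toFun := e.symm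
      nnnorm := ⟨3 / (2 * c), by positivity⟩
      bound' := fun y => by
        have := hb (e.symm y)
        rw [he] at this
        change ‖e.symm y‖ ≤ 3 / (2 * c) * ‖y‖
        rw [div_mul_eq_mul_div, le_div_iff₀ (by positivity)]
        linarith
      right_inv' := he }
  have happ : ApproximatesLinearOn B E Set.univ ‖B - E‖₊ := by
    intro x _ y _
    have := (B - E).le_opNorm (x - y)
    have e : ∀ a b c d : X, a - b - (c - d) = a - c - (b - d) := fun a b c d => by abel
    rw [map_sub, e]
    simpa [map_sub] using this
  have h1 := happ.image_mem_nhds r (x := 0) univ_mem (Or.inr (by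
    rw [← NNReal.coe_lt_coe]
    have h0 : ‖B - E‖ < c / 3 := by rw [norm_sub_rev]; exact hE
    have : ((r.nnnorm⁻¹ : NNReal) : ℝ) = 2 * c / 3 := by
      rw [NNReal.coe_inv]
      change (3 / (2 * c))⁻¹ = 2 * c / 3
      rw [inv_div]
    rw [this]
    change ‖B - E‖ < _
    linarith))
  rw [map_zero] at h1
  have : LinearMap.range (B : X →ₗ[ℝ] X) = ⊤ := by
    apply Submodule.eq_top_of_nonempty_interior'
    refine ⟨0, mem_interior_iff_mem_nhds.2 ?_⟩
    refine mem_of_superset h1 ?_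
    rintro _ ⟨x, -, rfl⟩
    exact ⟨x, rfl⟩
  exact LinearMap.range_eq_top.1 this

theorem index_contra {B F : X →L[ℝ] X} (hB : Function.Injective B)
    (hs : ¬ Function.Surjective B) (hF : FinRankOp F) (hBF : Function.Surjective (B + F)) :
    False := by
  haveI : FiniteDimensional ℝ (LinearMap.range (F : X →ₗ[ℝ] X)) := hF
  let B' : X →ₗ[ℝ] X := B
  let F' : X →ₗ[ℝ] X := F
  let Z := LinearMap.ker F'
  let Z' := Z.map B'
  haveI : FiniteDimensional ℝ (X ⧸ Z) := Module.Finite.equiv F'.quotKerEquivRange.symm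
  let b : (X ⧸ Z) →ₗ[ℝ] (X ⧸ Z') := Z.mapQ Z' B' (fun z hz => Submodule.mem_map_of_mem hz)
  let d : (X ⧸ Z) →ₗ[ℝ] (X ⧸ Z') := Z.mapQ Z' (B' + F') (fun z hz => by
    have : F' z = 0 := hz
    simp only [Submodule.mem_comap, LinearMap.add_apply, this, add_zero]
    exact Submodule.mem_map_of_mem hz)
  have hb : Function.Injective b := by
    rw [injective_iff_map_eq_zero]
    intro q
    obtain ⟨x, rfl⟩ := Z.mkQ_surjective q
    intro hx
    have hx' : B' x ∈ Z' := by
      rw [← Submodule.Quotient.mk_eq_zero]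
      exact hx
    obtain ⟨z, hz, hzx⟩ := hx'
    have : z = x := hB hzx
    rw [Submodule.mkQ_apply, Submodule.Quotient.mk_eq_zero]
    exact this ▸ hz
  have hd : Function.Surjective d := by
    intro q
    obtain ⟨y, rfl⟩ := Z'.mkQ_surjective q
    obtain ⟨x, hx⟩ := hBF y
    refine ⟨Z.mkQ x, ?_⟩
    have : (B' + F') x = y := hx
    simp [d, this]
  haveI : FiniteDimensional ℝ (X ⧸ Z') := Module.Finite.of_surjective d hd
  have h1 := LinearMap.finrank_le_finrank_of_injective hb
  have h2 := LinearMap.finrank_le_finrank_of_surjective hd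
  have hbs : Function.Surjective b :=
    (LinearMap.injective_iff_surjective_of_finrank_eq_finrank (le_antisymm h1 h2)).1 hb
  apply hs
  intro y
  obtain ⟨q, hq⟩ := hbs (Z'.mkQ y)
  obtain ⟨x, rfl⟩ := Z.mkQ_surjective q
  have h3 : B' x - y ∈ Z' := by
    rw [← Submodule.Quotient.mk_eq_zero, Submodule.Quotient.mk_sub, sub_eq_zero]
    exact hq
  obtain ⟨z, hz, hzx⟩ := h3
  refine ⟨x - z, ?_⟩
  have : B z = B x - y := hzx
  rw [map_sub, this]
  abel

theorem FinRankOp.sub {F G : X →L[ℝ] X} (hF : FinRankOp F) (hG : FinRankOp G) :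
    FinRankOp (F - G) := by
  haveI : FiniteDimensional ℝ (LinearMap.range (F : X →ₗ[ℝ] X)) := hF
  haveI : FiniteDimensional ℝ (LinearMap.range (G : X →ₗ[ℝ] X)) := hG
  have hle : LinearMap.range ((F - G : X →L[ℝ] X) : X →ₗ[ℝ] X) ≤
      LinearMap.range (F : X →ₗ[ℝ] X) ⊔ LinearMap.range (G : X →ₗ[ℝ] X) := by
    rintro _ ⟨x, rfl⟩
    have : (F - G) x = F x + -(G x) := by simp [sub_eq_add_neg]
    change (F - G) x ∈ _
    rw [this]
    exact Submodule.add_mem_sup ⟨x, rfl⟩ (neg_mem ⟨x, rfl⟩)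
  exact Submodule.finiteDimensional_of_le hle

theorem index_main [CompleteSpace X] {P : X →L[ℝ] X} (hP : BddBelowOp P)
    (hPs : ¬ Function.Surjective P)
    (hproper : ∀ t : ℝ, 0 < t → SeqProper (P + t • ContinuousLinearMap.id ℝ X)) : False := by
  let A : ℝ → (X →L[ℝ] X) := fun t => P + t • ContinuousLinearMap.id ℝ X
  have hA : Continuous A := by fun_prop
  let Q : Set ℝ := {t | ∃ F : X →L[ℝ] X, FinRankOp F ∧ BddBelowOp (A t + F) ∧ ¬ Function.Surjective ⇑(A t + F)}
  let Q' : Set ℝ := {t | ∃ F : X →L[ℝ] X, FinRankOp F ∧ Function.Surjective ⇑(A t + F)}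
  have hF0 : FinRankOp (0 : X →L[ℝ] X) := by
    have : LinearMap.range ((0 : X →L[ℝ] X) : X →ₗ[ℝ] X) = ⊥ := by
      rw [ContinuousLinearMap.coe_zero, LinearMap.range_zero]
    unfold FinRankOp
    rw [this]
    infer_instance
  have hnear : ∀ (t : ℝ) (F : X →L[ℝ] X) (ε : ℝ), 0 < ε → ∀ᶠ s in 𝓝 t, ‖(A s + F) - (A t + F)‖ < ε := by
    intro t F ε hε
    have := (Metric.tendsto_nhds.1 (hA.tendsto t)) ε hε
    filter_upwards [this] with s hs
    rw [dist_eq_norm] at hs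
    simpa using hs
  have hQ : IsOpen Q := by
    rw [isOpen_iff_mem_nhds]
    rintro t ⟨F, hF, h1, h2⟩
    obtain ⟨ε, hε, h⟩ := bddBelow_nonsurj_open h1 h2
    filter_upwards [hnear t F ε hε] with s hs
    exact ⟨F, hF, h _ hs⟩
  have hQ' : IsOpen Q' := by
    rw [isOpen_iff_mem_nhds]
    rintro t ⟨F, hF, h1⟩
    obtain ⟨ε, hε, h⟩ := surj_open h1
    filter_upwards [hnear t F ε hε] with s hs
    exact ⟨F, hF, h _ hs⟩
  have h0 : (0 : ℝ) ∈ Q := by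
    refine ⟨0, hF0, ?_⟩
    simp only [A, zero_smul, add_zero]
    exact ⟨hP, hPs⟩
  have hbig : (‖P‖ + 1) ∈ Q' := by
    refine ⟨0, hF0, ?_⟩
    rw [add_zero]
    set t := ‖P‖ + 1 with ht
    have htpos : 0 < t := by positivity
    have hu : IsUnit (1 - (-(t⁻¹ • P))) := by
      apply isUnit_one_sub_of_norm_lt_one
      rw [norm_neg, norm_smul, norm_inv, Real.norm_of_nonneg htpos.le, inv_mul_lt_iff₀ htpos]
      linarith
    obtain ⟨u, hu⟩ := hu
    have hAt : A t = t • (u : X →L[ℝ] X) := by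
      rw [hu]
      ext x
      simp [A, smul_smul, htpos.ne']
      abel
    intro y
    refine ⟨(↑u⁻¹ : X →L[ℝ] X) (t⁻¹ • y), ?_⟩
    rw [hAt, ContinuousLinearMap.smul_apply, ← ContinuousLinearMap.mul_apply, Units.mul_inv,
      ContinuousLinearMap.one_apply, smul_smul, mul_inv_cancel₀ htpos.ne', one_smul]
  have hcover : Set.Ici (0 : ℝ) ⊆ Q ∪ Q' := by
    intro t ht
    rcases eq_or_lt_of_le (Set.mem_Ici.1 ht) with h | h
    · exact Or.inl (h ▸ h0)
    · obtain ⟨F, hF, h1⟩ := (hproper t h).exists_finRank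
      by_cases hs : Function.Surjective ⇑(A t + F)
      · exact Or.inr ⟨F, hF, hs⟩
      · exact Or.inl ⟨F, hF, h1.resolve_right hs, hs⟩
  obtain ⟨t, -, ⟨F, hF, h1, h2⟩, ⟨G, hG, h3⟩⟩ := (isPreconnected_Ici (a := (0 : ℝ))) Q Q' hQ hQ' hcover
    ⟨0, Set.mem_Ici.2 le_rfl, h0⟩ ⟨‖P‖ + 1, Set.mem_Ici.2 (by positivity), hbig⟩
  refine index_contra h1.injective h2 (hG.sub hF) ?_
  have : A t + F + (G - F) = A t + G := by abel
  rw [this]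
  exact h3

end IndexPart

section LatticePart

variable {K : Type*} [TopologicalSpace K] [CompactSpace K] {ι : Type*}

structure ExhFam (p : ι → C(K, ℝ) → ℝ) (M : ℝ) : Prop where
  M_nonneg : 0 ≤ M
  mono : ∀ i f g, 0 ≤ f → f ≤ g → p i f ≤ p i g
  add : ∀ i f g, 0 ≤ f → 0 ≤ g → p i (f + g) ≤ p i f + p i g
  bound : ∀ i f (c : ℝ), 0 ≤ f → 0 ≤ c → (∀ y, f y ≤ c) → p i f ≤ M * c
  exh : ∀ e : ℕ → C(K, ℝ), (∀ n, 0 ≤ e n) → (∀ n, e n ≤ 1) → (∀ i j, i ≠ j → e i * e j = 0) →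
    ∀ η : ℝ, 0 < η → ∀ᶠ n in atTop, ∀ i, p i (e n) ≤ η

variable {p : ι → C(K, ℝ) → ℝ} {M : ℝ}

theorem ExhFam.sum (hp : ExhFam p M) (i : ι) {α : Type*} (s : Finset α) (f : α → C(K, ℝ))
    (hf : ∀ a, 0 ≤ f a) : p i (∑ a ∈ s, f a) ≤ ∑ a ∈ s, p i (f a) := by
  classical
  induction s using Finset.induction_on with
  | empty =>
    simp only [Finset.sum_empty]
    have := hp.bound i 0 0 le_rfl le_rfl (fun y => le_rfl)
    simpa using this
  | insert a s ha ih =>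
    rw [Finset.sum_insert ha, Finset.sum_insert ha]
    have := hp.add i (f a) (∑ a ∈ s, f a) (hf a) (Finset.sum_nonneg fun b _ => hf b)
    linarith

/-- the level crossing function -/
noncomputable def levelFun (N : ℕ) (h : ℕ → C(K, ℝ)) (k n : ℕ) : C(K, ℝ) where
  toFun y := min 1 (2 * N * min (max (h (n + 1) y - k / N) 0) (max (k / N - h n y) 0))
  continuous_toFun := by fun_prop

theorem levelFun_nonneg (N : ℕ) (h : ℕ → C(K, ℝ)) (k n : ℕ) : 0 ≤ levelFun N h k n := by
  intro y
  change (0 : ℝ) ≤ min 1 (2 * N * min (max (h (n + 1) y - k / N) 0) (max (k / N - h n y) 0))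
  positivity

theorem levelFun_le_one (N : ℕ) (h : ℕ → C(K, ℝ)) (k n : ℕ) : levelFun N h k n ≤ 1 := by
  intro y
  exact min_le_left _ _

theorem levelFun_cross (N : ℕ) (h : ℕ → C(K, ℝ)) (k n : ℕ) (y : K)
    (hy : levelFun N h k n y ≠ 0) : h n y < k / N ∧ (k / N : ℝ) < h (n + 1) y := by
  by_contra hcon
  apply hy
  change min 1 (2 * N * min (max (h (n + 1) y - k / N) 0) (max (k / N - h n y) 0)) = (0 : ℝ)
  rw [not_and_or, not_lt, not_lt] at hcon
  have : min (max (h (n + 1) y - k / N) 0) (max (k / N - h n y) 0) = (0 : ℝ) := by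
    rcases hcon with hc | hc
    · rw [max_eq_right (a := (k / N - h n y : ℝ)) (by linarith)]
      exact min_eq_right (le_max_right _ _)
    · rw [max_eq_right (a := (h (n + 1) y - k / N : ℝ)) (by linarith)]
      exact min_eq_left (le_max_right _ _)
  rw [this, mul_zero]
  exact min_eq_right zero_le_one

theorem levelFun_disj (N : ℕ) (h : ℕ → C(K, ℝ)) (hm : Monotone h) (k : ℕ) (i j : ℕ) (hij : i ≠ j) :
    levelFun N h k i * levelFun N h k j = 0 := by
  wlog hlt : i < j generalizing i j
  · rw [mul_comm]
    exact this j i hij.symm (lt_of_le_of_ne (not_lt.1 hlt) hij.symm)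
  ext y
  rw [ContinuousMap.mul_apply, ContinuousMap.zero_apply]
  by_contra hcon
  have h1 := levelFun_cross N h k i y (left_ne_zero_of_mul hcon)
  have h2 := levelFun_cross N h k j y (right_ne_zero_of_mul hcon)
  have h3 : h (i + 1) y ≤ h j y := hm hlt y
  linarith [h1.2, h2.1]

theorem levelFun_sum (N : ℕ) (hN : 0 < N) (h : ℕ → C(K, ℝ)) (h0 : ∀ n, 0 ≤ h n)
    (h1 : ∀ n, h n ≤ 1) (n : ℕ) (y : K) :
    h (n + 1) y - h n y ≤ 2 / N + ∑ k ∈ Finset.range (N + 1), levelFun N h k n y := by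
  have hN' : (0 : ℝ) < N := by exact_mod_cast hN
  have hnn : ∀ k ∈ Finset.range (N + 1), 0 ≤ levelFun N h k n y :=
    fun k _ => levelFun_nonneg N h k n y
  have ha : 0 ≤ h n y := h0 n y
  have hb : h (n + 1) y ≤ 1 := h1 (n + 1) y
  by_cases hc : h (n + 1) y - h n y ≤ 2 / N
  · have := Finset.sum_nonneg hnn
    linarith
  push Not at hc
  set a := h n y with ha_def
  set b := h (n + 1) y with hb_def
  let k := ⌈a * N + 1 / 2⌉₊
  have hk1 : a * N + 1 / 2 ≤ k := Nat.le_ceil _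
  have hk2 : (k : ℝ) < a * N + 1 / 2 + 1 := Nat.ceil_lt_add_one (by positivity)
  rw [div_lt_iff₀ hN'] at hc
  have hkN : k < N + 1 := by
    have : (k : ℝ) < N + 1 := by nlinarith
    exact_mod_cast this
  have hval : levelFun N h k n y = 1 := by
    change min 1 (2 * N * min (max (b - k / N) 0) (max (k / N - a) 0)) = (1 : ℝ)
    apply min_eq_left
    have e1 : 1 / (2 * N) ≤ b - k / N := by
      have : b - k / N - 1 / (2 * N) = (b * N - k - 1 / 2) / N := by field_simp
      have h3 : 0 ≤ (b * N - k - 1 / 2) / N := div_nonneg (by nlinarith) hN'.le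
      linarith
    have e2 : 1 / (2 * N) ≤ k / N - a := by
      have : k / N - a - 1 / (2 * N) = (k - a * N - 1 / 2) / N := by field_simp
      have h3 : 0 ≤ (k - a * N - 1 / 2) / N := div_nonneg (by nlinarith) hN'.le
      linarith
    have e3 : 1 / (2 * N) ≤ min (max (b - k / N) 0) (max (k / N - a) 0) :=
      le_min (e1.trans (le_max_left _ _)) (e2.trans (le_max_left _ _))
    calc (1 : ℝ) = 2 * N * (1 / (2 * N)) := by field_simp
      _ ≤ _ := mul_le_mul_of_nonneg_left e3 (by positivity)
  have hle := Finset.single_le_sum hnn (Finset.mem_range.2 hkN)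
  rw [hval] at hle
  have : (0 : ℝ) ≤ 2 / N := by positivity
  linarith

theorem ExhFam.mono_step (hp : ExhFam p M) (h : ℕ → C(K, ℝ)) (hm : Monotone h)
    (h0 : ∀ n, 0 ≤ h n) (h1 : ∀ n, h n ≤ 1) (η : ℝ) (hη : 0 < η) :
    ∀ᶠ n in atTop, ∀ i, p i (h (n + 1) - h n) ≤ η := by
  obtain ⟨N, hN⟩ := exists_nat_gt (4 * M / η)
  have hN0 : (0 : ℝ) < N := lt_of_le_of_lt (by have := hp.M_nonneg; positivity) hN
  have hNpos : 0 < N := by exact_mod_cast hN0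
  have hMN : M * (2 / N) ≤ η / 2 := by
    rw [div_lt_iff₀ hη] at hN
    rw [mul_div_assoc', div_le_iff₀ hN0]
    linarith
  have hev : ∀ᶠ n in atTop, ∀ k ∈ Finset.range (N + 1), ∀ i,
      p i (levelFun N h k n) ≤ η / (2 * (N + 1)) := by
    rw [Filter.eventually_all_finset]
    intro k _
    exact hp.exh (fun n => levelFun N h k n) (fun n => levelFun_nonneg N h k n)
      (fun n => levelFun_le_one N h k n) (fun i j hij => levelFun_disj N h hm k i j hij) _
      (by positivity)
  filter_upwards [hev] with n hn i
  let c : C(K, ℝ) := ContinuousMap.const K (2 / N : ℝ)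
  have hc0 : 0 ≤ c := fun y => by change (0 : ℝ) ≤ 2 / N; positivity
  have hle : h (n + 1) - h n ≤ c + ∑ k ∈ Finset.range (N + 1), levelFun N h k n := by
    intro y
    have := levelFun_sum N hNpos h h0 h1 n y
    simpa [c] using this
  have hs0 : 0 ≤ ∑ k ∈ Finset.range (N + 1), levelFun N h k n :=
    Finset.sum_nonneg fun k _ => levelFun_nonneg N h k n
  have e1 := hp.mono i _ _ (sub_nonneg.2 (hm (Nat.le_succ n))) hle
  have e2 := hp.add i c _ hc0 hs0
  have e3 := hp.bound i c (2 / N) hc0 (by positivity) (fun y => le_rfl)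
  have e4 := hp.sum i (Finset.range (N + 1)) (fun k => levelFun N h k n)
    (fun k => levelFun_nonneg N h k n)
  have e5 : ∑ k ∈ Finset.range (N + 1), p i (levelFun N h k n) ≤
      ∑ k ∈ Finset.range (N + 1), η / (2 * (N + 1)) := Finset.sum_le_sum fun k hk => hn k hk i
  have e6 : ∑ k ∈ Finset.range (N + 1), η / (2 * ((N : ℝ) + 1)) = η / 2 := by
    rw [Finset.sum_const, Finset.card_range, nsmul_eq_mul]
    push_cast
    field_simp
  linarith

theorem ExhFam.mono_cauchy (hp : ExhFam p M) (h : ℕ → C(K, ℝ)) (hm : Monotone h)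
    (h0 : ∀ n, 0 ≤ h n) (h1 : ∀ n, h n ≤ 1) (η : ℝ) (hη : 0 < η) :
    ∃ n, ∀ m, n ≤ m → ∀ i, p i (h m - h n) ≤ η := by
  by_contra hcon
  push Not at hcon
  choose nx hnx i hi using hcon
  let φ : ℕ → ℕ := fun k => nx^[k] 0
  have hφs : ∀ k, φ (k + 1) = nx (φ k) := fun k => Function.iterate_succ_apply' nx k 0
  have hφ : Monotone φ := monotone_nat_of_le_succ fun k => by rw [hφs]; exact hnx _
  have := hp.mono_step (h ∘ φ) (hm.comp hφ) (fun n => h0 _) (fun n => h1 _) η hη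
  obtain ⟨k, hk⟩ := this.exists
  have h2 := hk (i (φ k))
  have h3 := hi (φ k)
  simp only [Function.comp, hφs] at h2
  linarith

theorem ExhFam.anti_cauchy (hp : ExhFam p M) (h : ℕ → C(K, ℝ)) (hm : Antitone h)
    (h0 : ∀ n, 0 ≤ h n) (h1 : ∀ n, h n ≤ 1) (η : ℝ) (hη : 0 < η) :
    ∃ n, ∀ m, n ≤ m → ∀ i, p i (h n - h m) ≤ η := by
  obtain ⟨n, hn⟩ := hp.mono_cauchy (fun n => 1 - h n) (fun a b hab => sub_le_sub_left (hm hab) 1)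
    (fun n => sub_nonneg.2 (h1 n)) (fun n => sub_le_self _ (h0 n)) η hη
  refine ⟨n, fun m hmn i => ?_⟩
  have := hn m hmn i
  simpa using this

theorem ExhFam.no_seq (hp : ExhFam p M) (ε : ℝ) (hε : 0 < ε) (f : ℕ → C(K, ℝ)) (x : ℕ → ι)
    (f0 : ∀ n, 0 ≤ f n) (f1 : ∀ n, f n ≤ 1)
    (hlow : ∀ n, ε < p (x n) (f n))
    (hsmall : ∀ j n, j < n → p (x j) (f n) ≤ ε / 8 * (1 / 2) ^ n) : False := by
  let H : ℕ → ℕ → C(K, ℝ) := fun n => partialSups (fun k => f (n + k))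
  have Hm : ∀ n, Monotone (H n) := fun n => (partialSups (fun k => f (n + k))).monotone
  have Hge : ∀ n k, f (n + k) ≤ H n k := fun n k => le_partialSups (fun k => f (n + k)) k
  have H0 : ∀ n m, 0 ≤ H n m := fun n m => (f0 _).trans ((Hge n 0).trans (Hm n (Nat.zero_le m)))
  have H1 : ∀ n m, H n m ≤ 1 := fun n m => partialSups_le _ _ _ (fun i _ => f1 _)
  have Hsum : ∀ n m, H n m ≤ ∑ k ∈ Finset.range (m + 1), f (n + k) := fun n m =>
    partialSups_le _ _ _ (fun i hi => Finset.single_le_sum (f := fun k => f (n + k))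
      (fun k _ => f0 _) (Finset.mem_range.2 (Nat.lt_succ_of_le hi)))
  have hch : ∀ n, ∃ N, ∀ m, N ≤ m → ∀ i, p i (H n m - H n N) ≤ ε / 8 * (1 / 2) ^ n := fun n =>
    hp.mono_cauchy (H n) (Hm n) (H0 n) (H1 n) _ (by positivity)
  choose m hm using hch
  let G : ℕ → C(K, ℝ) := fun n => Nat.rec (H 0 (m 0)) (fun k g => g ⊓ H (k + 1) (m (k + 1))) n
  have Gs : ∀ n, G (n + 1) = G n ⊓ H (n + 1) (m (n + 1)) := fun n => rfl
  have Gz : G 0 = H 0 (m 0) := rfl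
  have Ganti : Antitone G := antitone_nat_of_succ_le fun n => by rw [Gs]; exact inf_le_left
  have G0 : ∀ n, 0 ≤ G n := by
    intro n
    induction n with
    | zero => exact H0 _ _
    | succ n ih => rw [Gs]; exact le_inf ih (H0 _ _)
  have G1 : ∀ n, G n ≤ 1 := fun n => (Ganti (Nat.zero_le n)).trans (H1 _ _)
  have hpos : ∀ j k, j ≤ k → ∀ i, p i ((f k - H j (m j)) ⊔ 0) ≤ ε / 8 * (1 / 2) ^ j := by
    intro j k hjk i
    refine (hp.mono i _ (H j (max (m j) k) - H j (m j)) le_sup_right ?_).trans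
      (hm j _ (le_max_left _ _) i)
    refine sup_le (sub_le_sub_right ?_ _) (sub_nonneg.2 (Hm j (le_max_left _ _)))
    obtain ⟨l, rfl⟩ := Nat.exists_eq_add_of_le hjk
    exact (Hge j l).trans (Hm j ((Nat.le_add_left l j).trans (le_max_right _ _)))
  have geo : ∀ n, ∑ j ∈ Finset.range n, ε / 8 * (1 / 2 : ℝ) ^ j ≤ ε / 4 := by
    intro n
    rw [← Finset.mul_sum]
    have := sum_geometric_two_le n
    nlinarith
  have hG : ∀ n k, n ≤ k → ∀ i, p i ((f k - G n) ⊔ 0) ≤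
      ∑ j ∈ Finset.range (n + 1), ε / 8 * (1 / 2 : ℝ) ^ j := by
    intro n
    induction n with
    | zero =>
      intro k hk i
      have := hpos 0 k hk i
      simpa [Gz] using this
    | succ n ih =>
      intro k hk i
      rw [Finset.sum_range_succ]
      have h1 := ih k ((Nat.le_succ n).trans hk) i
      have h2 := hpos (n + 1) k hk i
      have h3 : (f k - G (n + 1)) ⊔ 0 ≤ ((f k - G n) ⊔ 0) + ((f k - H (n + 1) (m (n + 1))) ⊔ 0) := by
        intro y
        rw [Gs]
        change max (f k y - min (G n y) (H (n + 1) (m (n + 1)) y)) 0 ≤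
          max (f k y - G n y) 0 + max (f k y - H (n + 1) (m (n + 1)) y) 0
        rcases le_total (G n y) (H (n + 1) (m (n + 1)) y) with hh | hh
        · rw [min_eq_left hh]
          exact le_add_of_nonneg_right (le_max_right _ _)
        · rw [min_eq_right hh]
          exact le_add_of_nonneg_left (le_max_right _ _)
      have h4 := hp.mono i _ _ le_sup_right h3
      have h5 := hp.add i ((f k - G n) ⊔ 0) ((f k - H (n + 1) (m (n + 1))) ⊔ 0) le_sup_right
        le_sup_right
      linarith
  obtain ⟨n, hn⟩ := hp.anti_cauchy G Ganti G0 G1 (ε / 4) (by positivity)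
  have e1 : p (x n) (f n) ≤ p (x n) (G n) + p (x n) ((f n - G n) ⊔ 0) := by
    refine (hp.mono _ _ (G n + (f n - G n) ⊔ 0) (f0 n) ?_).trans (hp.add _ _ _ (G0 n) le_sup_right)
    have : f n - G n ≤ (f n - G n) ⊔ 0 := le_sup_left
    exact sub_le_iff_le_add'.1 this
  have e2 := (hG n n le_rfl (x n)).trans (geo _)
  have e3 : p (x n) (G n) ≤ p (x n) (G n - G (n + 1)) + p (x n) (G (n + 1)) := by
    have := hp.add (x n) (G n - G (n + 1)) (G (n + 1)) (sub_nonneg.2 (Ganti (Nat.le_succ n)))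
      (G0 (n + 1))
    simpa using this
  have e4 := hn (n + 1) (Nat.le_succ n) (x n)
  have e5 : p (x n) (G (n + 1)) ≤ ε / 4 := by
    have hle : G (n + 1) ≤ ∑ k ∈ Finset.range (m (n + 1) + 1), f (n + 1 + k) := by
      rw [Gs]
      exact inf_le_right.trans (Hsum _ _)
    refine (hp.mono (x n) (G (n + 1)) _ (G0 (n + 1)) hle).trans
      ((hp.sum (x n) (Finset.range (m (n + 1) + 1)) (fun k => f (n + 1 + k))
        (fun k => f0 (n + 1 + k))).trans ?_)
    refine le_trans (Finset.sum_le_sum (g := fun k => ε / 8 * (1 / 2 : ℝ) ^ k) fun k _ => ?_) (geo _)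
    refine (hsmall n (n + 1 + k) (by omega)).trans ?_
    apply mul_le_mul_of_nonneg_left _ (by positivity)
    exact pow_le_pow_of_le_one (by norm_num) (by norm_num) (by omega)
  have e6 := hlow n
  linarith

theorem ExhFam.control (hp : ExhFam p M) (ε : ℝ) (hε : 0 < ε) :
    ∃ (F : Finset ι) (δ : ℝ), 0 < δ ∧ ∀ f : C(K, ℝ), 0 ≤ f → f ≤ 1 →
      (∀ j ∈ F, p j f ≤ δ) → ∀ i, p i f ≤ ε := by
  classical
  by_contra hcon
  push Not at hcon
  have hcon' : ∀ (F : Finset ι) (n : ℕ), ∃ f : C(K, ℝ), 0 ≤ f ∧ f ≤ 1 ∧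
      (∀ j ∈ F, p j f ≤ ε / 8 * (1 / 2) ^ n) ∧ ∃ i, ε < p i f := fun F n =>
    hcon F _ (by positivity)
  choose g g0 g1 g2 i hi using hcon'
  let F : ℕ → Finset ι := fun n => Nat.rec ∅ (fun n F => insert (i F n) F) n
  have Fs : ∀ n, F (n + 1) = insert (i (F n) n) (F n) := fun n => rfl
  have Fm : Monotone F := monotone_nat_of_le_succ fun n => by
    rw [Fs]
    exact Finset.subset_insert _ _
  refine hp.no_seq ε hε (fun n => g (F n) n) (fun n => i (F n) n) (fun n => g0 _ _)
    (fun n => g1 _ _) (fun n => hi _ _) (fun j n hjn => g2 _ _ _ ?_)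
  apply Fm hjn
  rw [Fs]
  exact Finset.mem_insert_self _ _

end LatticePart

section WMPart

variable {K : Type*} [TopologicalSpace K] [CompactSpace K]

/-- the total variation of the off-diagonal part of the functional at `x` -/
noncomputable def wp (T : C(K, ℝ) →L[ℝ] C(K, ℝ)) (x : K) (f : C(K, ℝ)) : ℝ :=
  sSup {r | ∃ h : C(K, ℝ), (∀ y, |h y| ≤ f y) ∧ h x = 0 ∧ r = T h x}

variable {T : C(K, ℝ) →L[ℝ] C(K, ℝ)}

theorem abs_apply_le_opNorm (T : C(K, ℝ) →L[ℝ] C(K, ℝ)) (h : C(K, ℝ)) (x : K) :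
    |T h x| ≤ ‖T‖ * ‖h‖ :=
  ((T h).norm_coe_le_norm x).trans (T.le_opNorm h)

theorem norm_le_of_abs_le {h f : C(K, ℝ)} (hh : ∀ y, |h y| ≤ f y) : ‖h‖ ≤ ‖f‖ := by
  rw [ContinuousMap.norm_le _ (norm_nonneg _)]
  intro y
  exact (hh y).trans ((le_abs_self _).trans (f.norm_coe_le_norm y))

theorem wp_bdd (x : K) (f : C(K, ℝ)) :
    BddAbove {r | ∃ h : C(K, ℝ), (∀ y, |h y| ≤ f y) ∧ h x = 0 ∧ r = T h x} := by
  refine ⟨‖T‖ * ‖f‖, ?_⟩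
  rintro r ⟨h, h1, h2, rfl⟩
  refine (le_abs_self _).trans ((abs_apply_le_opNorm T h x).trans ?_)
  exact mul_le_mul_of_nonneg_left (norm_le_of_abs_le h1) T.opNorm_nonneg

theorem le_wp {x : K} {f h : C(K, ℝ)} (h1 : ∀ y, |h y| ≤ f y) (h2 : h x = 0) :
    T h x ≤ wp T x f := le_csSup (wp_bdd x f) ⟨h, h1, h2, rfl⟩

theorem abs_le_wp {x : K} {f h : C(K, ℝ)} (h1 : ∀ y, |h y| ≤ f y) (h2 : h x = 0) :
    |T h x| ≤ wp T x f := by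
  rw [abs_le']
  refine ⟨le_wp h1 h2, ?_⟩
  have := le_wp (T := T) (x := x) (f := f) (h := -h) (by simpa using h1) (by simpa using h2)
  simpa using this

theorem wp_le {x : K} {f : C(K, ℝ)} (hf : 0 ≤ f) {c : ℝ}
    (hc : ∀ h : C(K, ℝ), (∀ y, |h y| ≤ f y) → h x = 0 → T h x ≤ c) : wp T x f ≤ c := by
  apply csSup_le
  · exact ⟨_, 0, fun y => by simpa using hf y, rfl, rfl⟩
  · rintro r ⟨h, h1, h2, rfl⟩
    exact hc h h1 h2

theorem wp_nonneg {x : K} {f : C(K, ℝ)} (hf : 0 ≤ f) : 0 ≤ wp T x f := by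
  have := le_wp (T := T) (x := x) (f := f) (h := 0) (fun y => by simpa using hf y) rfl
  simpa using this

theorem wp_mono {x : K} {f g : C(K, ℝ)} (hf : 0 ≤ f) (hfg : f ≤ g) : wp T x f ≤ wp T x g :=
  wp_le hf fun _ h1 h2 => le_wp (fun y => (h1 y).trans (hfg y)) h2

theorem wp_bound {x : K} {f : C(K, ℝ)} (hf : 0 ≤ f) : wp T x f ≤ ‖T‖ * ‖f‖ := by
  apply wp_le hf
  intro h h1 h2
  refine (le_abs_self _).trans ((abs_apply_le_opNorm T h x).trans ?_)
  exact mul_le_mul_of_nonneg_left (norm_le_of_abs_le h1) T.opNorm_nonneg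

theorem wp_add_le {x : K} {f g : C(K, ℝ)} (hf : 0 ≤ f) (hg : 0 ≤ g) :
    wp T x (f + g) ≤ wp T x f + wp T x g := by
  apply wp_le (add_nonneg hf hg)
  intro h h1 h2
  let a : C(K, ℝ) := (-f) ⊔ (f ⊓ h)
  have ha : ∀ y, a y = max (-f y) (min (f y) (h y)) := fun y => rfl
  have hf' : ∀ y, 0 ≤ f y := fun y => hf y
  have hg' : ∀ y, 0 ≤ g y := fun y => hg y
  have e1 : ∀ y, |a y| ≤ f y := by
    intro y
    rw [ha, abs_le]
    have := hf' y
    exact ⟨le_max_left _ _, max_le (by linarith) (min_le_left _ _)⟩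
  have e2 : a x = 0 := by
    have := hf' x
    rw [ha, h2, min_eq_right this, max_eq_right (by linarith)]
  have e3 : ∀ y, |(h - a) y| ≤ g y := by
    intro y
    have h3 := h1 y
    have := hf' y
    have := hg' y
    rw [ContinuousMap.add_apply, abs_le] at h3
    rw [ContinuousMap.sub_apply, ha, abs_le]
    rcases le_total (f y) (h y) with hh | hh
    · rw [min_eq_left hh, max_eq_right (by linarith)]
      constructor <;> linarith
    · rw [min_eq_right hh]
      rcases le_total (-f y) (h y) with hk | hk
      · rw [max_eq_right hk]
        constructor <;> linarith
      · rw [max_eq_left hk]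
        constructor <;> linarith
  have e4 : (h - a) x = 0 := by rw [ContinuousMap.sub_apply, h2, e2, sub_zero]
  have e5 := le_wp (T := T) e1 e2
  have e6 := le_wp (T := T) e3 e4
  rw [map_sub, ContinuousMap.sub_apply] at e6
  linarith

theorem wp_add {x : K} {f g : C(K, ℝ)} (hf : 0 ≤ f) (hg : 0 ≤ g) :
    wp T x (f + g) = wp T x f + wp T x g := by
  apply le_antisymm (wp_add_le hf hg)
  rw [← le_sub_iff_add_le]
  apply wp_le hf
  intro h h1 h2
  rw [le_sub_comm]
  apply wp_le hg
  intro k k1 k2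
  have := le_wp (T := T) (x := x) (f := f + g) (h := h + k)
    (fun y => (abs_add_le _ _).trans (add_le_add (h1 y) (k1 y)))
    (by rw [ContinuousMap.add_apply, h2, k2, add_zero])
  rw [map_add, ContinuousMap.add_apply] at this
  linarith

theorem wp_zero {x : K} : wp T x 0 = 0 := by
  apply le_antisymm
  · have := wp_bound (T := T) (x := x) (f := 0) le_rfl
    simpa using this
  · exact wp_nonneg le_rfl

theorem wp_smul_le {x : K} {f : C(K, ℝ)} (hf : 0 ≤ f) {c : ℝ} (hc : 0 < c) :
    wp T x (c • f) ≤ c * wp T x f := by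
  apply wp_le (smul_nonneg hc.le hf)
  intro h h1 h2
  have := le_wp (T := T) (x := x) (f := f) (h := c⁻¹ • h) (fun y => by
    have := h1 y
    rw [ContinuousMap.smul_apply, smul_eq_mul, abs_mul, abs_of_pos (inv_pos.2 hc),
      inv_mul_le_iff₀ hc]
    exact this) (by rw [ContinuousMap.smul_apply, h2, smul_zero])
  rw [map_smul, ContinuousMap.smul_apply, smul_eq_mul, inv_mul_le_iff₀ hc] at this
  exact this

theorem wp_smul {x : K} {f : C(K, ℝ)} (hf : 0 ≤ f) {c : ℝ} (hc : 0 ≤ c) :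
    wp T x (c • f) = c * wp T x f := by
  rcases hc.eq_or_lt with rfl | hc
  · rw [zero_smul, wp_zero, zero_mul]
  apply le_antisymm (wp_smul_le hf hc)
  have := wp_smul_le (T := T) (x := x) (smul_nonneg hc.le hf) (inv_pos.2 hc)
  rw [smul_smul, inv_mul_cancel₀ hc.ne', one_smul, le_inv_mul_iff₀ hc] at this
  exact this

theorem wp_exhFam (hT : IsWeakMultiplier T) : ExhFam (wp T) ‖T‖ where
  M_nonneg := T.opNorm_nonneg
  mono _ _ _ h1 h2 := wp_mono h1 h2
  add _ _ _ h1 h2 := wp_add_le h1 h2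
  bound x f c hf hc hfc := by
    refine (wp_bound hf).trans (mul_le_mul_of_nonneg_left ?_ T.opNorm_nonneg)
    rw [ContinuousMap.norm_le _ hc]
    intro y
    rw [Real.norm_eq_abs, abs_of_nonneg (show 0 ≤ f y from hf y)]
    exact hfc y
  exh e e0 e1 ed η hη := by
    rcases isEmpty_or_nonempty K with hK | ⟨⟨x0⟩⟩
    · exact Eventually.of_forall fun n i => (hK.false i).elim
    by_contra hcon
    rw [not_eventually] at hcon
    have hex : ∀ n, ∃ (h : C(K, ℝ)) (x : K), (∀ y, |h y| ≤ e n y) ∧ h x = 0 ∧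
        ((¬ ∀ i, wp T i (e n) ≤ η) → η < T h x) := by
      intro n
      by_cases hb : ∀ i, wp T i (e n) ≤ η
      · exact ⟨0, x0, fun y => by simpa using e0 n y, rfl, fun h => (h hb).elim⟩
      · obtain ⟨x, hx⟩ := not_forall.1 hb
        by_contra hno
        push Not at hno
        apply hx
        apply wp_le (e0 n)
        intro h h1 h2
        exact (hno h x h1 h2).2
    choose h x h1 h2 h3 using hex
    have := hT h x ⟨1, fun n => ?_⟩ ?_ h2
    · have h4 := this.eventually (gt_mem_nhds hη)
      obtain ⟨n, hn1, hn2⟩ := (hcon.and_eventually h4).exists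
      exact lt_asymm (h3 n hn1) hn2
    · rw [ContinuousMap.norm_le _ zero_le_one]
      intro y
      exact (h1 n y).trans (e1 n y)
    · intro i j hij
      ext y
      have e3 : e i y * e j y = 0 := by
        rw [← ContinuousMap.mul_apply, ed i j hij, ContinuousMap.zero_apply]
      rw [ContinuousMap.mul_apply, ContinuousMap.zero_apply]
      rcases mul_eq_zero.1 e3 with h4 | h4
      · have := h1 i y
        rw [h4, abs_nonpos_iff] at this
        rw [this, zero_mul]
      · have := h1 j y
        rw [h4, abs_nonpos_iff] at this
        rw [this, mul_zero]


section RMK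
open MeasureTheory NNReal CompactlySupported

theorem exists_measure_of_additive [T2Space K] [MeasurableSpace K] [BorelSpace K]
    (q : C(K, ℝ) → ℝ) (q0 : ∀ f, 0 ≤ f → 0 ≤ q f)
    (qadd : ∀ f g, 0 ≤ f → 0 ≤ g → q (f + g) = q f + q g)
    (qsmul : ∀ (c : ℝ) f, 0 ≤ c → 0 ≤ f → q (c • f) = c * q f) :
    ∃ μ : Measure K, IsFiniteMeasure μ ∧ ∀ f, 0 ≤ f → q f = ∫ y, f y ∂μ := by
  let tr : C_c(K, ℝ≥0) → C(K, ℝ) := fun f => ⟨fun y => (f y : ℝ), by fun_prop⟩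
  have tr0 : ∀ f, 0 ≤ tr f := fun f y => (f y).2
  let Λ : C_c(K, ℝ≥0) →ₗ[ℝ≥0] ℝ≥0 :=
    { toFun := fun f => ⟨q (tr f), q0 _ (tr0 f)⟩
      map_add' := fun f g => by
        apply NNReal.eq
        change q (tr (f + g)) = q (tr f) + q (tr g)
        rw [← qadd _ _ (tr0 f) (tr0 g)]
        congr 1
      map_smul' := fun c f => by
        apply NNReal.eq
        change q (tr (c • f)) = c * q (tr f)
        rw [← qsmul c _ c.2 (tr0 f)]
        congr 1 }
  refine ⟨NNRealRMK.rieszMeasure Λ, inferInstance, fun f hf => ?_⟩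
  let g : C_c(K, ℝ≥0) :=
    ⟨⟨fun y => (f y).toNNReal, by fun_prop⟩, HasCompactSupport.of_compactSpace _⟩
  have h1 := NNRealRMK.integral_rieszMeasure Λ g
  have h2 : tr g = f := by
    ext y
    exact Real.coe_toNNReal _ (hf y)
  have h3 : ((Λ g : ℝ≥0) : ℝ) = q (tr g) := rfl
  rw [← h2, ← h3, ← h1]
  rfl

theorem wp_control_single (hT : IsWeakMultiplier T) (ε : ℝ) (hε : 0 < ε) :
    ∃ (F : Finset K) (C : ℝ), 0 ≤ C ∧ ∀ x f, 0 ≤ f → wp T x f ≤ C * ∑ y ∈ F, wp T y f + ε * ‖f‖ := by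
  obtain ⟨F, δ, hδ, hF⟩ := (wp_exhFam hT).control ε hε
  have hM := T.opNorm_nonneg
  refine ⟨F, ε / δ + ε / δ, by positivity, fun x f hf => ?_⟩
  set s := ∑ y ∈ F, wp T y f with hs
  have hs0 : 0 ≤ s := Finset.sum_nonneg fun y _ => wp_nonneg hf
  rcases (norm_nonneg f).eq_or_lt with h0 | h0
  · have : f = 0 := norm_eq_zero.1 h0.symm
    rw [← h0, this, wp_zero]
    positivity
  set c := ‖f‖ + s / δ with hc
  have hc0 : 0 < c := by positivity
  have h1 := hF (c⁻¹ • f) (smul_nonneg (by positivity) hf) (fun y => by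
      change c⁻¹ * f y ≤ 1
      rw [inv_mul_le_iff₀ hc0, mul_one]
      have h3 := (le_abs_self _).trans (f.norm_coe_le_norm y)
      have : 0 ≤ s / δ := by positivity
      linarith) (fun j hj => by
      rw [wp_smul hf (by positivity), inv_mul_le_iff₀ hc0]
      have h4 : wp T j f ≤ s := Finset.single_le_sum (f := fun y => wp T y f)
        (fun y _ => wp_nonneg hf) hj
      have h5 : s / δ * δ = s := by field_simp
      nlinarith) x
  rw [wp_smul hf (by positivity), inv_mul_le_iff₀ hc0] at h1
  have h6 : c * ε = ε / δ * s + ε * ‖f‖ := by rw [hc]; field_simp; ring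
  have h7 : 0 ≤ ε / δ * s := by positivity
  linarith

theorem wp_control [T2Space K] [MeasurableSpace K] [BorelSpace K] (hT : IsWeakMultiplier T) :
    ∃ μ : Measure K, IsFiniteMeasure μ ∧ ∀ ε : ℝ, 0 < ε → ∃ C : ℝ, 0 ≤ C ∧
      ∀ x f, 0 ≤ f → wp T x f ≤ C * ∫ y, f y ∂μ + ε * ‖f‖ := by
  have hM := T.opNorm_nonneg
  have hk : ∀ k : ℕ, _ := fun k => wp_control_single hT (1 / ((k : ℝ) + 1)) (by positivity)
  choose F C hC hF using hk
  let c : ℕ → ℝ := fun k => (1 / 2) ^ k * ((F k).card * ‖T‖ + 1)⁻¹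
  have hc : ∀ k, 0 < c k := fun k => by positivity
  let t : C(K, ℝ) → ℕ → ℝ := fun f k => c k * ∑ y ∈ F k, wp T y f
  have ht0 : ∀ f, 0 ≤ f → ∀ k, 0 ≤ t f k := fun f hf k =>
    mul_nonneg (hc k).le (Finset.sum_nonneg fun y _ => wp_nonneg hf)
  have hsum : ∀ f, 0 ≤ f → Summable (t f) := by
    intro f hf
    refine Summable.of_nonneg_of_le (ht0 f hf) (fun k => ?_)
      ((summable_geometric_two).mul_right ‖f‖)
    have h1 : ∑ y ∈ F k, wp T y f ≤ (F k).card * (‖T‖ * ‖f‖) := by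
      rw [← nsmul_eq_mul]
      exact Finset.sum_le_card_nsmul _ _ _ fun y _ => wp_bound hf
    have h2 : t f k ≤ c k * ((F k).card * (‖T‖ * ‖f‖)) :=
      mul_le_mul_of_nonneg_left h1 (hc k).le
    refine h2.trans ?_
    have h3 : (0 : ℝ) < (F k).card * ‖T‖ + 1 := by positivity
    have h4 : c k * ((F k).card * (‖T‖ * ‖f‖)) =
      (1 / 2) ^ k * ((((F k).card * ‖T‖ + 1)⁻¹ * ((F k).card * ‖T‖)) * ‖f‖) := by
      simp only [c]; ring
    rw [h4]
    apply mul_le_mul_of_nonneg_left _ (by positivity)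
    apply mul_le_of_le_one_left (norm_nonneg _)
    rw [inv_mul_le_iff₀ h3]
    linarith
  obtain ⟨μ, hμ, hμi⟩ := exists_measure_of_additive (fun f => ∑' k, t f k)
    (fun f hf => tsum_nonneg (ht0 f hf))
    (fun f g hf hg => by
      rw [← (hsum f hf).tsum_add (hsum g hg)]
      congr 1
      ext k
      simp only [t, wp_add hf hg, Finset.sum_add_distrib]
      ring)
    (fun a f ha hf => by
      rw [← (hsum f hf).tsum_mul_left a]
      congr 1
      ext k
      simp only [t, wp_smul hf ha, ← Finset.mul_sum]
      ring)
  refine ⟨μ, hμ, fun ε hε => ?_⟩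
  obtain ⟨k, hk⟩ := exists_nat_one_div_lt hε
  refine ⟨C k * (c k)⁻¹, mul_nonneg (hC k) (inv_nonneg.2 (hc k).le), fun x f hf => ?_⟩
  refine (hF k x f hf).trans (add_le_add ?_ (mul_le_mul_of_nonneg_right hk.le (norm_nonneg _)))
  rw [mul_assoc]
  apply mul_le_mul_of_nonneg_left _ (hC k)
  rw [← hμi f hf, le_inv_mul_iff₀ (hc k)]
  exact (hsum f hf).le_tsum k (fun j _ => ht0 f hf j)

end RMK

section HilbertPart

theorem hilbert_weak_subseq {H : Type*} [NormedAddCommGroup H] [InnerProductSpace ℝ H]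
    [CompleteSpace H] (h : ℕ → H) (M : ℝ) (hM : ∀ n, ‖h n‖ ≤ M) :
    ∃ φ : ℕ → ℕ, StrictMono φ ∧ ∀ ψ : H →L[ℝ] ℝ, ∃ l, Tendsto (fun n => ψ (h (φ n))) atTop (𝓝 l) := by
  let V : Submodule ℝ H := (Submodule.span ℝ (Set.range h)).topologicalClosure
  have hVc : IsClosed (V : Set H) := Submodule.isClosed_topologicalClosure _
  haveI : CompleteSpace V := hVc.completeSpace_coe
  have hsep : TopologicalSpace.IsSeparable (V : Set H) := by
    have h1 := ((Set.countable_range h).isSeparable.span (R := ℝ)).closure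
    exact h1
  haveI : TopologicalSpace.SeparableSpace V := hsep.separableSpace
  have hV : ∀ n, h n ∈ V := fun n =>
    Submodule.le_topologicalClosure _ (Submodule.subset_span (Set.mem_range_self n))
  let k : ℕ → V := fun n => ⟨h n, hV n⟩
  let F : ℕ → WeakDual ℝ V := fun n =>
    StrongDual.toWeakDual (InnerProductSpace.toDual ℝ V (k n))
  have hF : ∀ n, F n ∈ (WeakDual.toStrongDual ⁻¹' Metric.closedBall (0 : StrongDual ℝ V) M :
      Set (WeakDual ℝ V)) := by
    intro n
    change InnerProductSpace.toDual ℝ V (k n) ∈ Metric.closedBall (0 : StrongDual ℝ V) M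
    rw [mem_closedBall_zero_iff, LinearIsometryEquiv.norm_map]
    exact hM n
  obtain ⟨a, -, φ, hφ, ha⟩ := WeakDual.isSeqCompact_closedBall ℝ V (0 : StrongDual ℝ V) M hF
  refine ⟨φ, hφ, fun ψ => ?_⟩
  let v : V := (InnerProductSpace.toDual ℝ V).symm (ψ.comp V.subtypeL)
  refine ⟨a v, ?_⟩
  have h2 := ((WeakDual.eval_continuous v).tendsto a).comp ha
  refine h2.congr fun n => ?_
  change inner ℝ (k (φ n)) v = ψ (h (φ n))
  rw [real_inner_comm]
  have h3 : inner ℝ v (k (φ n)) = (InnerProductSpace.toDual ℝ V v) (k (φ n)) := rfl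
  rw [h3, LinearIsometryEquiv.apply_symm_apply]
  rfl

end HilbertPart

theorem norm_abs_C (f : C(K, ℝ)) : ‖|f|‖ = ‖f‖ := by
  apply le_antisymm
  · rw [ContinuousMap.norm_le _ (norm_nonneg _)]
    intro y
    have : ‖|f| y‖ = ‖f y‖ := by
      change ‖|f y|‖ = ‖f y‖
      simp
    rw [this]
    exact f.norm_coe_le_norm y
  · exact norm_le_of_abs_le fun y => le_rfl

theorem wm_decomp (T : C(K, ℝ) →L[ℝ] C(K, ℝ)) : ∃ (g : K → ℝ) (ν : K → (C(K, ℝ) →ₗ[ℝ] ℝ)),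
    (∀ x, |g x| ≤ 2 * ‖T‖) ∧ (∀ x f, T f x = g x * f x + ν x f) ∧
      ∀ x f, |ν x f| ≤ wp T x |f| := by
  suffices hx : ∀ x, ∃ (g : ℝ) (ν : C(K, ℝ) →ₗ[ℝ] ℝ), |g| ≤ 2 * ‖T‖ ∧
      (∀ f, T f x = g * f x + ν f) ∧ ∀ f, |ν f| ≤ wp T x |f| by
    choose g ν h1 h2 h3 using hx
    exact ⟨g, ν, h1, h2, h3⟩
  intro x
  let ev : C(K, ℝ) →ₗ[ℝ] ℝ := 
    { toFun := fun f => f x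
      map_add' := fun f g => rfl
      map_smul' := fun c f => rfl }
  let P : C(K, ℝ) →ₗ.[ℝ] ℝ := ⟨LinearMap.ker ev, (ev.comp T.toLinearMap).domRestrict _⟩
  have hP : ∀ f : P.domain, P f = T f x := fun f => rfl
  have habs : ∀ f : C(K, ℝ), ∀ y, |f| y = |f y| := fun f y => rfl
  obtain ⟨ν, hν1, hν2⟩ := exists_extension_of_le_sublinear P (fun f => wp T x |f|)
    (fun c hc f => by
      rw [show |c • f| = c • |f| from ?_, wp_smul (abs_nonneg _) hc.le]
      ext y
      change |c * f y| = c * |f y|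
      rw [abs_mul, abs_of_pos hc])
    (fun f g => by
      rw [← wp_add (abs_nonneg _) (abs_nonneg _)]
      exact wp_mono (abs_nonneg _) (abs_add_le _ _))
    (fun f => by
      rw [hP]
      refine le_wp (fun y => le_rfl) ?_
      exact f.2)
  have hν3 : ∀ f, |ν f| ≤ wp T x |f| := by
    intro f
    rw [abs_le']
    refine ⟨hν2 f, ?_⟩
    have := hν2 (-f)
    simpa using this
  have hν0 : ∀ f : C(K, ℝ), f x = 0 → ν f = T f x := fun f hf => hν1 ⟨f, hf⟩
  refine ⟨T 1 x - ν 1, ν, ?_, ?_, hν3⟩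
  · have h1 := abs_apply_le_opNorm T 1 x
    have h2 := (hν3 1).trans (wp_bound (abs_nonneg _))
    have h3 : ‖(1 : C(K, ℝ))‖ ≤ 1 := by
      rw [ContinuousMap.norm_le _ zero_le_one]
      intro y
      simp
    rw [norm_abs_C] at h2
    have h4 := abs_sub (T 1 x) (ν 1)
    have := T.opNorm_nonneg
    nlinarith
  · intro f
    have h1 := hν0 (f - f x • 1) (by simp)
    rw [map_sub, map_sub, map_smul, map_smul] at h1
    simp only [ContinuousMap.sub_apply, ContinuousMap.smul_apply, smul_eq_mul] at h1
    linarith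

section L2
open MeasureTheory

variable [MeasurableSpace K] [BorelSpace K]

theorem integral_abs_le_L2 (μ : Measure K) [IsFiniteMeasure μ] : ∃ c : ℝ, 0 ≤ c ∧ ∀ f : C(K, ℝ),
    ∫ y, |f y| ∂μ ≤ c * ‖ContinuousMap.toLp 2 μ ℝ f‖ := by
  refine ⟨‖ContinuousMap.toLp 2 μ ℝ (1 : C(K, ℝ))‖, norm_nonneg _, fun f => ?_⟩
  have h1 : ‖ContinuousMap.toLp 2 μ ℝ |f|‖ = ‖ContinuousMap.toLp 2 μ ℝ f‖ := by
    rw [← sq_eq_sq₀ (norm_nonneg _) (norm_nonneg _), ← real_inner_self_eq_norm_sq,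
      ← real_inner_self_eq_norm_sq, ContinuousMap.inner_toLp, ContinuousMap.inner_toLp]
    congr 1
    ext y
    change |f y| * |f y| = f y * f y
    exact abs_mul_abs_self _
  have h2 : ∫ y, |f y| ∂μ =
      inner ℝ (ContinuousMap.toLp 2 μ ℝ (1 : C(K, ℝ))) (ContinuousMap.toLp 2 μ ℝ |f|) := by
    rw [ContinuousMap.inner_toLp]
    congr 1
    ext y
    change |f y| = |f y| * 1
    rw [mul_one]
  rw [h2, ← h1]
  exact real_inner_le_norm _ _

theorem nu_subseq (μ : Measure K) [IsFiniteMeasure μ] (ν : K → (C(K, ℝ) →ₗ[ℝ] ℝ))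
    (hν : ∀ ε : ℝ, 0 < ε → ∃ C : ℝ, 0 ≤ C ∧ ∀ x f, |ν x f| ≤ C * ∫ y, |f y| ∂μ + ε * ‖f‖)
    (f : ℕ → C(K, ℝ)) (M : ℝ) (hM : ∀ n, ‖f n‖ ≤ M) :
    ∃ φ : ℕ → ℕ, StrictMono φ ∧ ∀ x, ∃ l, Tendsto (fun n => ν x (f (φ n))) atTop (𝓝 l) := by
  have hM0 : 0 ≤ M := (norm_nonneg _).trans (hM 0)
  let ι := ContinuousMap.toLp (E := ℝ) 2 μ ℝ
  obtain ⟨c, hc, hι⟩ := integral_abs_le_L2 μ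
  obtain ⟨φ, hφ, hw⟩ := hilbert_weak_subseq (fun n => ι (f n)) (‖ι‖ * M)
    (fun n => (ι.le_opNorm _).trans (mul_le_mul_of_nonneg_left (hM n) ι.opNorm_nonneg))
  refine ⟨φ, hφ, fun x => ?_⟩
  apply cauchySeq_tendsto_of_complete
  rw [Metric.cauchySeq_iff]
  intro η hη
  let ε := η / (4 * (M + 1))
  have hε : 0 < ε := by positivity
  obtain ⟨C, hC, hCν⟩ := hν ε hε
  let J : C(K, ℝ) →ₗ[ℝ] (Lp ℝ 2 μ) × C(K, ℝ) := ι.toLinearMap.prod LinearMap.id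
  let P : ((Lp ℝ 2 μ) × C(K, ℝ)) →ₗ.[ℝ] ℝ := ⟨LinearMap.range J, ((ν x).comp (LinearMap.snd ℝ _ _)).domRestrict _⟩
  have hP : ∀ z : P.domain, P z = ν x z.1.2 := fun z => rfl
  obtain ⟨G, hG1, hG2⟩ := exists_extension_of_le_sublinear P
    (fun z => C * c * ‖z.1‖ + ε * ‖z.2‖)
    (fun a ha z => by
      simp only [Prod.smul_fst, Prod.smul_snd, norm_smul, Real.norm_eq_abs, abs_of_pos ha]
      ring)
    (fun z w => by
      have h1 := norm_add_le z.1 w.1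
      have h2 := norm_add_le z.2 w.2
      have h3 := mul_le_mul_of_nonneg_left h1 (mul_nonneg hC hc)
      have h4 := mul_le_mul_of_nonneg_left h2 hε.le
      simp only [Prod.fst_add, Prod.snd_add]
      linarith)
    (fun z => by
      rw [hP]
      obtain ⟨z, f', rfl⟩ := z
      change ν x f' ≤ C * c * ‖ι f'‖ + ε * ‖f'‖
      have h1 := (le_abs_self _).trans (hCν x f')
      have h2 := mul_le_mul_of_nonneg_left (hι f') hC
      have h3 : C * (c * ‖ι f'‖) = C * c * ‖ι f'‖ := by ring
      linarith)
  have hGν : ∀ u, ν x u = G (ι u, 0) + G (0, u) := by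
    intro u
    have h1 := hG1 ⟨J u, LinearMap.mem_range_self J u⟩
    rw [hP] at h1
    rw [← map_add]
    simp only [Prod.mk_add_mk, add_zero, zero_add]
    exact h1.symm
  let ψ : Lp ℝ 2 μ →L[ℝ] ℝ := LinearMap.mkContinuous (G.comp (LinearMap.inl ℝ _ _)) (C * c) (by
    intro h
    rw [Real.norm_eq_abs, abs_le']
    constructor
    · have := hG2 (h, 0)
      simpa using this
    · have := hG2 (-h, 0)
      rw [show ((-h, 0) : (Lp ℝ 2 μ) × C(K, ℝ)) = -(h, 0) by simp, map_neg] at this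
      simpa using this)
  have hψ : ∀ u, ψ u = G (u, 0) := fun u => rfl
  have hψ' : ∀ u : C(K, ℝ), |G (0, u)| ≤ ε * ‖u‖ := by
    intro u
    rw [abs_le']
    constructor
    · have := hG2 (0, u)
      simpa using this
    · have := hG2 (0, -u)
      rw [show ((0, -u) : (Lp ℝ 2 μ) × C(K, ℝ)) = -(0, u) by simp, map_neg] at this
      simpa using this
  obtain ⟨l, hl⟩ := hw ψ
  obtain ⟨N, hN⟩ := Metric.cauchySeq_iff.1 hl.cauchySeq (η / 2) (by positivity)
  refine ⟨N, fun m hm n hn => ?_⟩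
  have h1 := hN m hm n hn
  rw [Real.dist_eq] at h1 ⊢
  have h2 : ν x (f (φ m)) - ν x (f (φ n)) =
      (ψ (ι (f (φ m))) - ψ (ι (f (φ n)))) + G (0, f (φ m) - f (φ n)) := by
    rw [← map_sub, hGν, map_sub ι, hψ, hψ, ← map_sub G (_, _)]
    simp only [Prod.mk_sub_mk, sub_zero]
  have h3 := hψ' (f (φ m) - f (φ n))
  have h4 : ‖f (φ m) - f (φ n)‖ ≤ 2 * M := by
    have := norm_sub_le (f (φ m)) (f (φ n))
    linarith [hM (φ m), hM (φ n)]
  have h5 : ε * ‖f (φ m) - f (φ n)‖ ≤ η / 2 := by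
    have h6 : ε * (4 * (M + 1)) = η := by simp only [ε]; field_simp
    nlinarith
  rw [h2]
  refine (abs_add_le _ _).trans_lt ?_
  linarith

theorem nu_unif (μ : Measure K) [IsFiniteMeasure μ] (ν : K → (C(K, ℝ) →ₗ[ℝ] ℝ))
    (hν : ∀ ε : ℝ, 0 < ε → ∃ C : ℝ, 0 ≤ C ∧ ∀ x f, |ν x f| ≤ C * ∫ y, |f y| ∂μ + ε * ‖f‖)
    (u : ℕ → C(K, ℝ)) (M : ℝ) (hM : ∀ n, ‖u n‖ ≤ M)
    (hu : ∀ y, ∃ l, Tendsto (fun n => u n y) atTop (𝓝 l)) (η : ℝ) (hη : 0 < η) :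
    ∃ N, ∀ m, N ≤ m → ∀ n, N ≤ n → ∀ x, |ν x (u m - u n)| ≤ η := by
  have hM0 : 0 ≤ M := (norm_nonneg _).trans (hM 0)
  have hd : ∀ m n, ‖u m - u n‖ ≤ 2 * M := fun m n => by
    have := norm_sub_le (u m) (u n)
    linarith [hM m, hM n]
  have hlim : Tendsto (fun q : ℕ × ℕ => ∫ y, |(u q.1 - u q.2) y| ∂μ) (atTop ×ˢ atTop) (𝓝 0) := by
    have h0 : ∫ _y : K, (0 : ℝ) ∂μ = 0 := integral_zero _ _
    rw [← h0]
    apply tendsto_integral_filter_of_dominated_convergence (fun _ => 2 * M)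
    · exact Eventually.of_forall fun q => (u q.1 - u q.2).continuous.abs.aestronglyMeasurable
    · refine Eventually.of_forall fun q => Eventually.of_forall fun y => ?_
      rw [Real.norm_eq_abs, abs_abs]
      exact ((u q.1 - u q.2).norm_coe_le_norm y).trans (hd _ _)
    · exact integrable_const _
    · refine Eventually.of_forall fun y => ?_
      obtain ⟨l, hl⟩ := hu y
      have := ((hl.comp tendsto_fst).sub (hl.comp tendsto_snd) :
        Tendsto _ ((atTop : Filter ℕ) ×ˢ (atTop : Filter ℕ)) _).abs
      rw [sub_self, abs_zero] at this
      exact this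
  let ε := η / (4 * (M + 1))
  have hε : 0 < ε := by positivity
  have h6 : ε * (4 * (M + 1)) = η := by simp only [ε]; field_simp
  obtain ⟨C, hC, hCν⟩ := hν ε hε
  have h1 := hlim.eventually (gt_mem_nhds (show 0 < η / (2 * (C + 1)) by positivity))
  rw [prod_atTop_atTop_eq, eventually_atTop] at h1
  obtain ⟨⟨N1, N2⟩, hN⟩ := h1
  refine ⟨max N1 N2, fun m hm n hn x => ?_⟩
  have h2 := hN (m, n) ⟨(le_max_left _ _).trans hm, (le_max_right _ _).trans hn⟩
  have h3 := hCν x (u m - u n)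
  have h4 : C * ∫ y, |(u m - u n) y| ∂μ ≤ C * (η / (2 * (C + 1))) :=
    mul_le_mul_of_nonneg_left h2.le hC
  have h5 : C * (η / (2 * (C + 1))) ≤ η / 2 := by
    rw [mul_div_assoc', div_le_div_iff₀ (by positivity) (by positivity)]
    nlinarith
  have h7 := hd m n
  nlinarith

end L2

theorem wm_seqProper [T2Space K] (hT : IsWeakMultiplier T) (t : ℝ) (ht : 0 < t) :
    SeqProper (T.comp T + t • ContinuousLinearMap.id ℝ C(K, ℝ)) := by
  letI : MeasurableSpace K := borel K
  haveI : BorelSpace K := ⟨rfl⟩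
  obtain ⟨μ, hμ, hctl⟩ := wp_control hT
  obtain ⟨g, ν, hg, hdec, hνp⟩ := wm_decomp T
  have hν : ∀ ε : ℝ, 0 < ε → ∃ C : ℝ, 0 ≤ C ∧
      ∀ x f, |ν x f| ≤ C * ∫ y, |f y| ∂μ + ε * ‖f‖ := by
    intro ε hε
    obtain ⟨C, hC, h⟩ := hctl ε hε
    refine ⟨C, hC, fun x f => (hνp x f).trans ?_⟩
    have := h x |f| (abs_nonneg _)
    rw [norm_abs_C] at this
    exact this
  set A := T.comp T + t • ContinuousLinearMap.id ℝ C(K, ℝ) with hA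
  have hid : ∀ f x, (g x ^ 2 + t) * f x = A f x - g x * ν x f - ν x (T f) := by
    intro f x
    have h1 : A f x = T (T f) x + t * f x := rfl
    rw [h1, hdec x (T f), hdec x f]
    ring
  have hpos : ∀ x, 0 < g x ^ 2 + t := fun x => by positivity
  rintro f ⟨M, hM⟩ ⟨v, hv⟩
  obtain ⟨φ₁, hφ₁, hc₁⟩ := nu_subseq μ ν hν f M hM
  have hTM : ∀ n, ‖T (f n)‖ ≤ ‖T‖ * M := fun n =>
    (T.le_opNorm _).trans (mul_le_mul_of_nonneg_left (hM n) T.opNorm_nonneg)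
  obtain ⟨φ₂, hφ₂, hc₂⟩ := nu_subseq μ ν hν (fun n => T (f (φ₁ n))) (‖T‖ * M) (fun n => hTM _)
  refine ⟨φ₁ ∘ φ₂, hφ₁.comp hφ₂, ?_⟩
  set u : ℕ → C(K, ℝ) := fun n => f (φ₁ (φ₂ n)) with hu
  have hAu : Tendsto (fun n => A (u n)) atTop (𝓝 v) :=
    hv.comp ((hφ₁.comp hφ₂).tendsto_atTop)
  have hνu : ∀ x, ∃ l, Tendsto (fun n => ν x (u n)) atTop (𝓝 l) := fun x => by
    obtain ⟨l, hl⟩ := hc₁ x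
    exact ⟨l, hl.comp hφ₂.tendsto_atTop⟩
  have hu1 : ∀ x, ∃ l, Tendsto (fun n => u n x) atTop (𝓝 l) := by
    intro x
    obtain ⟨l, hl⟩ := hνu x
    obtain ⟨l', hl'⟩ := hc₂ x
    have h1 : Tendsto (fun n => A (u n) x) atTop (𝓝 (v x)) :=
      ((continuous_eval_const (F := C(K, ℝ)) x).tendsto v).comp hAu
    have h2 := ((h1.sub (hl.const_mul (g x))).sub hl').const_mul (g x ^ 2 + t)⁻¹
    refine ⟨_, h2.congr fun n => ?_⟩
    rw [← hid, ← mul_assoc, inv_mul_cancel₀ (hpos x).ne', one_mul]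
  have hu2 : ∀ x, ∃ l, Tendsto (fun n => T (u n) x) atTop (𝓝 l) := by
    intro x
    obtain ⟨l, hl⟩ := hνu x
    obtain ⟨l', hl'⟩ := hu1 x
    refine ⟨_, ((hl'.const_mul (g x)).add hl).congr fun n => ?_⟩
    rw [hdec]
  apply cauchySeq_tendsto_of_complete
  rw [Metric.cauchySeq_iff]
  intro η hη
  have hG := T.opNorm_nonneg
  let s := η * t / (8 * (‖T‖ + 1))
  have hs : 0 < s := by positivity
  have hs' : s * (8 * (‖T‖ + 1)) = η * t := by simp only [s]; field_simp
  obtain ⟨N1, hN1⟩ := nu_unif μ ν hν u M (fun n => hM _) hu1 s hs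
  obtain ⟨N2, hN2⟩ := nu_unif μ ν hν (fun n => T (u n)) (‖T‖ * M) (fun n => hTM _) hu2 s hs
  obtain ⟨N3, hN3⟩ := Metric.cauchySeq_iff.1 hAu.cauchySeq s hs
  refine ⟨max N1 (max N2 N3), fun m hm n hn => ?_⟩
  simp only [ge_iff_le, max_le_iff] at hm hn
  have e1 := hN1 m hm.1 n hn.1
  have e2 := hN2 m hm.2.1 n hn.2.1
  have e3 := hN3 m hm.2.2 n hn.2.2
  rw [dist_eq_norm] at e3
  change dist (u m) (u n) < η
  rw [dist_eq_norm]
  refine lt_of_le_of_lt ?_ (half_lt_self hη)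
  rw [ContinuousMap.norm_le _ (by positivity)]
  intro x
  have h1 := hid (u m - u n) x
  have h2 : |A (u m - u n) x| ≤ s := by
    rw [map_sub]
    exact ((A (u m) - A (u n)).norm_coe_le_norm x).trans e3.le
  have h3 : |ν x (T (u m - u n))| ≤ s := by
    rw [map_sub T]
    exact e2 x
  have h4 : |g x * ν x (u m - u n)| ≤ 2 * ‖T‖ * s := by
    rw [abs_mul]
    exact mul_le_mul (hg x) (e1 x) (abs_nonneg _) (by positivity)
  have h5 : (g x ^ 2 + t) * |(u m - u n) x| ≤ s + 2 * ‖T‖ * s + s := by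
    rw [← abs_of_pos (hpos x), ← abs_mul, h1]
    refine (abs_sub _ _).trans (add_le_add ((abs_sub _ _).trans (add_le_add h2 h4)) h3)
  have h6 : t * |(u m - u n) x| ≤ t * (η / 2) := by
    have h7 : 0 ≤ g x ^ 2 * |(u m - u n) x| := by positivity
    nlinarith
  exact le_of_mul_le_mul_left h6 ht

theorem wm_bddBelow_surjective [T2Space K] (hT : IsWeakMultiplier T) (hb : BddBelowOp T) :
    Function.Surjective T := by
  by_contra hs
  refine index_main (P := T.comp T) ?_ ?_ (fun t ht => wm_seqProper hT t ht)
  · obtain ⟨c, hc, h⟩ := hb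
    refine ⟨c * c, by positivity, fun f => ?_⟩
    have h1 := h f
    have h2 := h (T f)
    have h3 := mul_le_mul_of_nonneg_left h1 hc.le
    change c * c * ‖f‖ ≤ ‖T (T f)‖
    linarith
  · intro h
    apply hs
    intro y
    obtain ⟨z, hz⟩ := h y
    exact ⟨T z, hz⟩

end WMPart

section SpacePart

theorem abs_sum_disj {ι : Type*} (s : Finset ι) (a : ι → ℝ) (hd : ∀ i j, i ≠ j → a i * a j = 0)
    {B : ℝ} (hB : 0 ≤ B) (h : ∀ i ∈ s, |a i| ≤ B) : |∑ i ∈ s, a i| ≤ B := by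
  classical
  by_cases hex : ∃ i ∈ s, a i ≠ 0
  · obtain ⟨i, hi, hi0⟩ := hex
    rw [Finset.sum_eq_single i]
    · exact h i hi
    · intro j _ hji
      exact (mul_eq_zero.1 (hd j i hji)).resolve_right hi0
    · exact fun hn => (hn hi).elim
  · push Not at hex
    rw [Finset.sum_eq_zero hex, abs_zero]
    exact hB

variable {K : Type*} [TopologicalSpace K] [CompactSpace K]

theorem disj_apply {e : ℕ → C(K, ℝ)} (hd : ∀ i j, i ≠ j → e i * e j = 0) (y : K) (i j : ℕ)
    (hij : i ≠ j) : e i y * e j y = 0 := by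
  rw [← ContinuousMap.mul_apply, hd i j hij, ContinuousMap.zero_apply]

theorem functional_disj_tendsto (φ : C(K, ℝ) →L[ℝ] ℝ) (e : ℕ → C(K, ℝ)) (M : ℝ)
    (hM : ∀ n, ‖e n‖ ≤ M) (hd : ∀ i j, i ≠ j → e i * e j = 0) :
    Tendsto (fun n => φ (e n)) atTop (𝓝 0) := by
  have hM0 : 0 ≤ M := (norm_nonneg _).trans (hM 0)
  have hs : Summable fun n => |φ (e n)| := by
    refine summable_of_sum_le (c := ‖φ‖ * M) (fun n => abs_nonneg _) fun s => ?_
    let c : ℕ → ℝ := fun n => if 0 ≤ φ (e n) then 1 else -1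
    have hc : ∀ n, |c n| = 1 := fun n => by
      simp only [c]
      split_ifs <;> simp
    have h1 : ∑ n ∈ s, |φ (e n)| = φ (∑ n ∈ s, c n • e n) := by
      rw [map_sum]
      refine Finset.sum_congr rfl fun n _ => ?_
      rw [map_smul, smul_eq_mul]
      simp only [c]
      split_ifs with h
      · rw [abs_of_nonneg h, one_mul]
      · rw [abs_of_neg (not_le.1 h), neg_one_mul]
    rw [h1]
    refine (le_abs_self _).trans ((φ.le_opNorm _).trans ?_)
    apply mul_le_mul_of_nonneg_left _ φ.opNorm_nonneg
    rw [ContinuousMap.norm_le _ hM0]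
    intro y
    rw [ContinuousMap.sum_apply]
    have h2 : ∀ n, |(c n • e n) y| ≤ |e n y| := by
      intro n
      rw [ContinuousMap.smul_apply, smul_eq_mul, abs_mul, hc, one_mul]
    apply abs_sum_disj _ _ _ hM0
    · intro n _
      exact (h2 n).trans (((e n).norm_coe_le_norm y).trans (hM n))
    · intro i j hij
      rcases mul_eq_zero.1 (disj_apply hd y i j hij) with h | h
      · have := h2 i
        rw [h, abs_zero, abs_nonpos_iff] at this
        rw [this, zero_mul]
      · have := h2 j
        rw [h, abs_zero, abs_nonpos_iff] at this
        rw [this, mul_zero]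
  exact tendsto_zero_iff_abs_tendsto_zero _ |>.2 hs.tendsto_atTop_zero

/-- evaluation of an operator at a point -/
noncomputable def evOp (T : C(K, ℝ) →L[ℝ] C(K, ℝ)) (y : K) : C(K, ℝ) →L[ℝ] ℝ :=
  (ContinuousMap.evalCLM ℝ y).comp T

theorem evOp_apply (T : C(K, ℝ) →L[ℝ] C(K, ℝ)) (y : K) (f : C(K, ℝ)) : evOp T y f = T f y := rfl

theorem spaceable_of_family (e : ℕ → C(K, ℝ)) (x : ℕ → K) (M : ℝ) (hM : ∀ n, ‖e n‖ ≤ M)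
    (hd : ∀ i j, i ≠ j → e i * e j = 0) (hx : ∀ n, e n (x n) = 0)
    (R : ℕ → (C(K, ℝ) →L[ℝ] C(K, ℝ))) (C : ℝ) (hC : ∀ j, ‖R j‖ ≤ C)
    (hR : ∀ f i j, i ≠ j → R i f * R j f = 0) (ε : ℝ) (hε : 0 < ε)
    (hlow : ∀ j, ∃ᶠ n in atTop, ε ≤ |R j (e n) (x n)|) :
    Spaceable {T : C(K, ℝ) →L[ℝ] C(K, ℝ) | ¬ IsWeakMultiplier T} := by
  have hM0 : 0 ≤ M := (norm_nonneg _).trans (hM 0)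
  have hC0 : 0 ≤ C := (R 0).opNorm_nonneg.trans (hC 0)
  let L := Finsupp.linearCombination ℝ R
  have hLapp : ∀ a f y, L a f y = ∑ j ∈ a.support, a j * R j f y := by
    intro a f y
    have h1 : L a = ∑ j ∈ a.support, a j • R j := Finsupp.linearCombination_apply ℝ a
    rw [h1, sum_apply, ContinuousMap.sum_apply]
    rfl
  have hRd : ∀ f y i j, i ≠ j → R i f y * R j f y = 0 := fun f y i j hij =>
    disj_apply (e := fun i => R i f) (hR f) y i j hij
  have hLnorm : ∀ (a : ℕ →₀ ℝ) (m : ℝ), 0 ≤ m → (∀ j, |a j| ≤ m) → ‖L a‖ ≤ m * C := by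
    intro a m hm ha
    refine ContinuousLinearMap.opNorm_le_bound _ (mul_nonneg hm hC0) fun f => ?_
    rw [ContinuousMap.norm_le _ (by positivity)]
    intro y
    rw [hLapp]
    apply abs_sum_disj
    · intro i j hij
      have := hRd f y i j hij
      linear_combination (a i * a j) * this
    · positivity
    · intro j _
      rw [abs_mul, mul_assoc]
      refine mul_le_mul (ha j) ?_ (abs_nonneg _) hm
      refine ((R j f).norm_coe_le_norm y).trans (((R j).le_opNorm f).trans ?_)
      exact mul_le_mul_of_nonneg_right (hC j) (norm_nonneg _)
  have hLlow : ∀ (a : ℕ →₀ ℝ) j, ∃ᶠ n in atTop, |a j| * ε ≤ |L a (e n) (x n)| := by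
    intro a j
    refine (hlow j).mono fun n hn => ?_
    have h1 : R j (e n) (x n) ≠ 0 := by
      intro h
      rw [h, abs_zero] at hn
      linarith
    rw [hLapp, Finset.sum_eq_single j, abs_mul]
    · exact mul_le_mul_of_nonneg_left hn (abs_nonneg _)
    · intro i _ hij
      rw [(mul_eq_zero.1 (hRd (e n) (x n) i j hij)).resolve_right h1, mul_zero]
    · intro hj
      rw [Finsupp.notMem_support_iff.1 hj, zero_mul]
  have hinj : Function.Injective L := by
    rw [injective_iff_map_eq_zero]
    intro a ha
    ext j
    obtain ⟨n, hn⟩ := (hLlow a j).exists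
    rw [ha] at hn
    have h1 : |a j| * ε ≤ 0 := by simpa using hn
    have h2 : |a j| ≤ 0 := nonpos_of_mul_nonpos_left h1 hε
    exact abs_nonpos_iff.1 h2
  refine ⟨(LinearMap.range L).topologicalClosure, Submodule.isClosed_topologicalClosure _, ?_, ?_⟩
  · intro hfin
    have hle : ∀ j, R j ∈ (LinearMap.range L).topologicalClosure := fun j =>
      Submodule.le_topologicalClosure _ ⟨Finsupp.single j 1, by simp [L]⟩
    have hli : LinearIndependent ℝ R := hinj
    have hli' : LinearIndependent ℝ
        (fun j => (⟨R j, hle j⟩ : (LinearMap.range L).topologicalClosure)) :=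
      LinearIndependent.of_comp (LinearMap.range L).topologicalClosure.subtype hli
    have hfin2 : Finite ℕ := hli'.finite
    exact not_finite ℕ
  · intro S hS
    by_cases hw : IsWeakMultiplier S
    · right
      rw [Set.mem_singleton_iff]
      suffices h0 : ‖S‖ ≤ 0 from (ContinuousLinearMap.opNorm_zero_iff S).1 (le_antisymm h0 S.opNorm_nonneg)
      have hSt := hw e x ⟨M, hM⟩ hd hx
      have key : ∀ η : ℝ, 0 < η → ‖S‖ ≤ η * (1 + (1 + M) / ε * C) := by
        intro η hη
        have hS' : S ∈ closure (LinearMap.range L : Set (C(K, ℝ) →L[ℝ] C(K, ℝ))) := hS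
        obtain ⟨S', ⟨a, rfl⟩, hSS⟩ := (Metric.mem_closure_iff (α := C(K, ℝ) →L[ℝ] C(K, ℝ))).1 hS' η hη
        have hdn : dist S (L a) = ‖S - L a‖ :=
          dist_eq_norm (E := C(K, ℝ) →L[ℝ] C(K, ℝ)) S (L a)
        replace hSS : ‖S - L a‖ < η := lt_of_eq_of_lt hdn.symm hSS
        have hev : ∀ᶠ n in atTop, |S (e n) (x n)| < η := by
          have := hSt.abs.eventually (gt_mem_nhds (by simpa using hη))
          exact this
        have ha : ∀ j, |a j| ≤ η * (1 + M) / ε := by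
          intro j
          obtain ⟨n, hn1, hn2⟩ := ((hLlow a j).and_eventually hev).exists
          rw [le_div_iff₀ hε]
          have h3 : |S (e n) (x n) - L a (e n) (x n)| ≤ η * M := by
            have h4 := abs_apply_le_opNorm (S - L a) (e n) (x n)
            refine h4.trans (mul_le_mul hSS.le (hM n) (norm_nonneg _) hη.le)
          have h5 := abs_sub_abs_le_abs_sub (L a (e n) (x n)) (S (e n) (x n))
          rw [abs_sub_comm] at h5
          linarith
        have h6 := hLnorm a _ (by positivity) ha
        have h7 : ‖S‖ ≤ ‖S - L a‖ + ‖L a‖ := by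
          have := norm_add_le (S - L a) (L a)
          rwa [sub_add_cancel] at this
        have h8 : η * (1 + M) / ε * C = η * ((1 + M) / ε * C) := by ring
        linarith
      set D := 1 + (1 + M) / ε * C with hD
      have hD0 : 0 < D := by positivity
      refine le_of_forall_pos_le_add fun η hη => ?_
      have := key (η / D) (by positivity)
      rw [div_mul_cancel₀ _ hD0.ne'] at this
      linarith
    · left
      exact hw

theorem exists_good_sequence {T : C(K, ℝ) →L[ℝ] C(K, ℝ)} (hT : ¬ IsWeakMultiplier T) :
    ∃ (e : ℕ → C(K, ℝ)) (x : ℕ → K) (M ε : ℝ), (∀ n, ‖e n‖ ≤ M) ∧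
      (∀ i j, i ≠ j → e i * e j = 0) ∧ (∀ n, e n (x n) = 0) ∧ 0 < ε ∧
      (∀ n, ε ≤ |T (e n) (x n)|) ∧ Function.Injective x := by
  unfold IsWeakMultiplier at hT
  push Not at hT
  obtain ⟨e, x, ⟨M, hM⟩, hd, hx, hnt⟩ := hT
  rw [Metric.tendsto_atTop] at hnt
  push Not at hnt
  obtain ⟨ε, hε, hfr⟩ := hnt
  let I : Set ℕ := {n | ε ≤ |T (e n) (x n)|}
  have hI : I.Infinite := by
    rw [Set.infinite_iff_exists_gt]
    intro N
    obtain ⟨n, hn, h⟩ := hfr (N + 1)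
    rw [dist_zero_right] at h
    exact ⟨n, h, hn⟩
  have hxI : (x '' I).Infinite := by
    intro hfin
    apply hI
    refine Set.Finite.of_finite_fibers x hfin fun y _ => ?_
    have h1 := functional_disj_tendsto (evOp T y) e M hM hd
    have h2 := h1.abs.eventually (gt_mem_nhds (show |(0 : ℝ)| < ε by simpa using hε))
    rw [← Nat.cofinite_eq_atTop] at h2
    have h3 : {n | ¬ |evOp T y (e n)| < ε}.Finite := h2
    refine h3.subset ?_
    rintro n ⟨hn1, hn2⟩
    have hn3 : x n = y := hn2
    rw [Set.mem_ofPred_eq, not_lt, evOp_apply, ← hn3]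
    exact hn1
  obtain ⟨s, hsI, hbij⟩ := Set.exists_subset_bijOn I x
  have hs : s.Infinite := by
    intro hfin
    apply hxI
    rw [← hbij.image_eq]
    exact hfin.image x
  obtain ⟨φ, hφ, hφs⟩ := extraction_of_frequently_atTop (Nat.frequently_atTop_iff_infinite.2 hs)
  refine ⟨e ∘ φ, x ∘ φ, M, ε, fun n => hM _, fun i j hij => hd _ _ (hφ.injective.ne hij),
    fun n => hx _, hε, fun n => hsI (hφs n), ?_⟩
  intro a b hab
  exact hφ.injective (hbij.injOn (hφs a) (hφs b) hab)

theorem disjoint_bumps (x : ℕ → K) (Pr : Set ℕ → Prop)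
    (hstep : ∀ A : Set ℕ, A.Infinite → ∃ (B A' : Set ℕ) (v w : C(K, ℝ)), B ⊆ A ∧ A' ⊆ A ∧ Pr B ∧
      A'.Infinite ∧ (∀ y, |v y| ≤ 1) ∧ (∀ y, |w y| ≤ 1) ∧ (∀ n ∈ B, v (x n) = 1) ∧
      (∀ n ∈ A', w (x n) = 1) ∧ v * w = 0) :
    ∃ (B : ℕ → Set ℕ) (g : ℕ → C(K, ℝ)), (∀ j, Pr (B j)) ∧ (∀ j y, |g j y| ≤ 1) ∧
      (∀ i j, i ≠ j → g i * g j = 0) ∧ ∀ j, ∀ n ∈ B j, g j (x n) = 1 := by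
  have hstep' : ∀ A : {A : Set ℕ // A.Infinite}, ∃ (B : Set ℕ) (A' : {A : Set ℕ // A.Infinite})
      (v w : C(K, ℝ)), B ⊆ A.1 ∧ A'.1 ⊆ A.1 ∧ Pr B ∧
      (∀ y, |v y| ≤ 1) ∧ (∀ y, |w y| ≤ 1) ∧ (∀ n ∈ B, v (x n) = 1) ∧
      (∀ n ∈ A'.1, w (x n) = 1) ∧ v * w = 0 := by
    rintro ⟨A, hA⟩
    obtain ⟨B, A', v, w, h1, h2, h3, h4, h5⟩ := hstep A hA
    exact ⟨B, ⟨A', h4⟩, v, w, h1, h2, h3, h5⟩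
  choose B nx v w hB hnx hP hv hw hvB hwA hvw using hstep'
  let A : ℕ → {A : Set ℕ // A.Infinite} := fun j => nx^[j] ⟨Set.univ, Set.infinite_univ⟩
  have hAs : ∀ j, A (j + 1) = nx (A j) := fun j => Function.iterate_succ_apply' nx j _
  let W : ℕ → C(K, ℝ) := fun j => ∏ i ∈ Finset.range j, w (A i)
  have hWs : ∀ j, W (j + 1) = W j * w (A j) := fun j => Finset.prod_range_succ _ _
  have hWb : ∀ j y, |W j y| ≤ 1 := by
    intro j y
    induction j with
    | zero => simp [W]
    | succ j ih =>
      rw [hWs, ContinuousMap.mul_apply, abs_mul]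
      exact mul_le_one₀ ih (abs_nonneg _) (hw _ _)
  have hWA : ∀ j, ∀ n ∈ (A j).1, W j (x n) = 1 := by
    intro j
    induction j with
    | zero => intro n _; simp [W]
    | succ j ih =>
      intro n hn
      rw [hAs] at hn
      rw [hWs, ContinuousMap.mul_apply, ih n (hnx _ hn), hwA _ n hn, one_mul]
  have hdvd : ∀ i j, i ≤ j → W i ∣ W j := fun i j hij =>
    Finset.prod_dvd_prod_of_subset _ _ _ (Finset.range_mono hij)
  have hlt : ∀ i j, i < j → (W i * v (A i)) * (W j * v (A j)) = 0 := by
    intro i j hij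
    obtain ⟨z, hz⟩ := hdvd (i + 1) j hij
    rw [hz, hWs]
    linear_combination (W i * W i * z * v (A j)) * hvw (A i)
  refine ⟨fun j => B (A j), fun j => W j * v (A j), fun j => hP _, fun j y => ?_, fun i j hij => ?_,
    fun j n hn => ?_⟩
  · rw [ContinuousMap.mul_apply, abs_mul]
    exact mul_le_one₀ (hWb _ _) (abs_nonneg _) (hv _ _)
  · rcases lt_or_gt_of_ne hij with h | h
    · exact hlt i j h
    · rw [mul_comm]
      exact hlt j i h
  · rw [ContinuousMap.mul_apply, hWA j n (hB _ hn), hvB _ n hn, one_mul]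

theorem exists_sep [T2Space K] {p q : K} (hpq : p ≠ q) : ∃ u v w : C(K, ℝ),
    u p = 0 ∧ u q = 1 ∧ (∀ y, |v y| ≤ 1) ∧ (∀ y, |w y| ≤ 1) ∧ (∀ y, u y < 1 / 3 → v y = 1) ∧
      (∀ y, 2 / 3 < u y → w y = 1) ∧ v * w = 0 := by
  obtain ⟨u, hu0, hu1, -⟩ := exists_continuous_zero_one_of_isClosed (isClosed_singleton (x := p))
    (isClosed_singleton (x := q)) (Set.disjoint_singleton.2 hpq)
  let v : C(K, ℝ) := ⟨fun y => max 0 (min 1 (3 - 6 * u y)), by fun_prop⟩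
  let w : C(K, ℝ) := ⟨fun y => max 0 (min 1 (6 * u y - 3)), by fun_prop⟩
  have hv : ∀ y, v y = max 0 (min 1 (3 - 6 * u y)) := fun y => rfl
  have hw : ∀ y, w y = max 0 (min 1 (6 * u y - 3)) := fun y => rfl
  have hb : ∀ r : ℝ, |max 0 (min 1 r)| ≤ 1 := fun r => by
    rw [abs_of_nonneg (le_max_left _ _)]
    exact max_le zero_le_one (min_le_left _ _)
  refine ⟨u, v, w, hu0 rfl, hu1 rfl, fun y => hb _, fun y => hb _, fun y hy => ?_, fun y hy => ?_,
    ?_⟩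
  · rw [hv, min_eq_left (by linarith), max_eq_right zero_le_one]
  · rw [hw, min_eq_left (by linarith), max_eq_right zero_le_one]
  · ext y
    rw [ContinuousMap.mul_apply, ContinuousMap.zero_apply, hv, hw]
    rcases le_total (u y) (1 / 2) with h | h
    · rw [min_eq_right (a := (1 : ℝ)) (b := 6 * u y - 3) (by linarith),
        max_eq_left (b := 6 * u y - 3) (by linarith), mul_zero]
    · rw [min_eq_right (a := (1 : ℝ)) (b := 3 - 6 * u y) (by linarith),
        max_eq_left (b := 3 - 6 * u y) (by linarith), zero_mul]

theorem step_case1 [T2Space K] (x : ℕ → K)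
    (hno : ∀ A : Set ℕ, A.Infinite → ∀ q, ¬ Tendsto x (cofinite ⊓ 𝓟 A) (𝓝 q)) :
    ∀ A : Set ℕ, A.Infinite → ∃ (B A' : Set ℕ) (v w : C(K, ℝ)), B ⊆ A ∧ A' ⊆ A ∧ B.Infinite ∧
      A'.Infinite ∧ (∀ y, |v y| ≤ 1) ∧ (∀ y, |w y| ≤ 1) ∧ (∀ n ∈ B, v (x n) = 1) ∧
      (∀ n ∈ A', w (x n) = 1) ∧ v * w = 0 := by
  intro A hA
  haveI : NeBot (cofinite ⊓ 𝓟 A) := cofinite_inf_principal_neBot_iff.2 hA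
  let F := map x (cofinite ⊓ 𝓟 A)
  obtain ⟨p, hp⟩ := exists_clusterPt_of_compactSpace F
  have hq : ∃ q, ClusterPt q F ∧ q ≠ p := by
    by_contra hcon
    push Not at hcon
    exact hno A hA p (le_nhds_of_unique_clusterPt fun y hy => hcon y hy)
  obtain ⟨q, hq, hqp⟩ := hq
  obtain ⟨u, v, w, hup, huq, hv, hw, hv1, hw1, hvw⟩ := exists_sep hqp.symm
  have hinf : ∀ (z : K) (U : Set K), ClusterPt z F → IsOpen U → z ∈ U → {n ∈ A | x n ∈ U}.Infinite := by
    intro z U hz hU hzU hfin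
    have h1 : MapClusterPt z (cofinite ⊓ 𝓟 A) x := hz
    have h2 : ∃ᶠ n in cofinite ⊓ 𝓟 A, x n ∈ U := h1.frequently (hU.mem_nhds hzU)
    rw [frequently_inf_principal] at h2
    exact (frequently_cofinite_iff_infinite.1 h2) hfin
  refine ⟨{n ∈ A | x n ∈ u ⁻¹' Set.Iio (1 / 3)}, {n ∈ A | x n ∈ u ⁻¹' Set.Ioi (2 / 3)}, v, w,
    Set.sep_subset _ _, Set.sep_subset _ _, ?_, ?_, hv, hw, ?_, ?_, hvw⟩
  · refine hinf p _ hp (isOpen_Iio.preimage u.continuous) ?_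
    simp [hup]
  · refine hinf q _ hq (isOpen_Ioi.preimage u.continuous) ?_
    simp only [Set.mem_preimage, huq, Set.mem_Ioi]
    norm_num
  · exact fun n hn => hv1 _ hn.2
  · exact fun n hn => hw1 _ hn.2

theorem step_case2 [T2Space K] (x : ℕ → K) (hinj : Function.Injective x) (q : K)
    (hlim : Tendsto x cofinite (𝓝 q)) :
    ∀ A : Set ℕ, A.Infinite → ∃ (B A' : Set ℕ) (v w : C(K, ℝ)), B ⊆ A ∧ A' ⊆ A ∧ B.Nonempty ∧
      A'.Infinite ∧ (∀ y, |v y| ≤ 1) ∧ (∀ y, |w y| ≤ 1) ∧ (∀ n ∈ B, v (x n) = 1) ∧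
      (∀ n ∈ A', w (x n) = 1) ∧ v * w = 0 := by
  intro A hA
  have hne : ∃ n ∈ A, x n ≠ q := by
    by_contra hcon
    push Not at hcon
    apply hA
    apply Set.Subsingleton.finite
    intro a ha b hb
    exact hinj ((hcon a ha).trans (hcon b hb).symm)
  obtain ⟨n0, hn0, hq⟩ := hne
  obtain ⟨u, v, w, hup, huq, hv, hw, hv1, hw1, hvw⟩ := exists_sep hq
  refine ⟨{n0}, {n ∈ A | 2 / 3 < u (x n)}, v, w, Set.singleton_subset_iff.2 hn0,
    Set.sep_subset _ _, Set.singleton_nonempty _, ?_, hv, hw, ?_, ?_, hvw⟩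
  · have h1 : ∀ᶠ n in cofinite, 2 / 3 < u (x n) := by
      have h2 : Tendsto (fun n => u (x n)) cofinite (𝓝 (u q)) := (u.continuous.tendsto q).comp hlim
      exact h2.eventually (lt_mem_nhds (by rw [huq]; norm_num))
    have h3 : ({n | 2 / 3 < u (x n)}ᶜ : Set ℕ).Finite := h1
    have h4 := hA.sdiff h3
    refine h4.mono ?_
    rintro n ⟨hn1, hn2⟩
    exact ⟨hn1, not_not.1 hn2⟩
  · rintro n rfl
    apply hv1
    rw [hup]
    norm_num
  · exact fun n hn => hw1 _ hn.2

theorem summable_disj (g : ℕ → C(K, ℝ)) (hb : ∀ j y, |g j y| ≤ 1)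
    (hd : ∀ i j, i ≠ j → g i * g j = 0) (c : ℕ → ℝ) (hc : Tendsto c cofinite (𝓝 0)) :
    Summable fun k => c k • g k := by
  rw [summable_iff_vanishing_norm]
  intro η hη
  have h1 : ∀ᶠ k in cofinite, |c k| < η / 2 := by
    have := hc.abs.eventually (gt_mem_nhds (show |(0 : ℝ)| < η / 2 by simpa using hη))
    exact this
  have h2 : {k | ¬ |c k| < η / 2}.Finite := h1
  refine ⟨h2.toFinset, fun t ht => ?_⟩
  refine lt_of_le_of_lt (b := η / 2) ?_ (by linarith)
  rw [ContinuousMap.norm_le _ (by positivity)]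
  intro y
  rw [ContinuousMap.sum_apply]
  apply abs_sum_disj _ _ _ (by positivity)
  · intro k hk
    have h3 : |c k| < η / 2 := by
      by_contra hcon
      exact Finset.disjoint_left.1 ht hk (h2.mem_toFinset.2 hcon)
    rw [ContinuousMap.smul_apply, smul_eq_mul, abs_mul]
    have h4 := mul_le_mul h3.le (hb k y) (abs_nonneg _) (by positivity)
    linarith
  · intro i j hij
    have h5 := disj_apply hd y i j hij
    simp only [ContinuousMap.smul_apply, smul_eq_mul]
    linear_combination (c i * c j) * h5

theorem tsum_disj_apply (g : ℕ → C(K, ℝ)) (hb : ∀ j y, |g j y| ≤ 1)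
    (hd : ∀ i j, i ≠ j → g i * g j = 0) (c : ℕ → ℝ) (hc : Tendsto c cofinite (𝓝 0)) (k : ℕ) (y : K)
    (hk : g k y ≠ 0) : (∑' k, c k • g k) y = c k * g k y := by
  rw [← ContinuousMap.tsum_apply (summable_disj g hb hd c hc), tsum_eq_single k]
  · rfl
  · intro i hi
    rw [ContinuousMap.smul_apply,
      (mul_eq_zero.1 (disj_apply hd y i k hi)).resolve_right hk, smul_zero]

theorem tsum_disj_apply_zero (g : ℕ → C(K, ℝ)) (hb : ∀ j y, |g j y| ≤ 1)
    (hd : ∀ i j, i ≠ j → g i * g j = 0) (c : ℕ → ℝ) (hc : Tendsto c cofinite (𝓝 0)) (y : K)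
    (hk : ∀ k, g k y = 0) : (∑' k, c k • g k) y = 0 := by
  rw [← ContinuousMap.tsum_apply (summable_disj g hb hd c hc)]
  simp [hk]

theorem exists_diagOp (g : ℕ → C(K, ℝ)) (hb : ∀ j y, |g j y| ≤ 1)
    (hd : ∀ i j, i ≠ j → g i * g j = 0) (z : ℕ → K) (q : K) (hz : Tendsto z cofinite (𝓝 q))
    (j : ℕ) : ∃ P : C(K, ℝ) →L[ℝ] C(K, ℝ), ‖P‖ ≤ 2 ∧
      (∀ f k y, g k y ≠ 0 → P f y = (if k.unpair.1 = j then f (z k) - f q else 0) * g k y) ∧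
      (∀ f y, (∀ k, g k y = 0) → P f y = 0) := by
  let c : C(K, ℝ) → ℕ → ℝ := fun f k => if k.unpair.1 = j then f (z k) - f q else 0
  have hcabs : ∀ f k, |c f k| ≤ |f (z k) - f q| := by
    intro f k
    simp only [c]
    split_ifs
    · exact le_rfl
    · rw [abs_zero]
      exact abs_nonneg _
  have hc : ∀ f, Tendsto (c f) cofinite (𝓝 0) := by
    intro f
    refine squeeze_zero_norm (hcabs f) ?_
    have h1 : Tendsto (fun k => f (z k)) cofinite (𝓝 (f q)) := (f.continuous.tendsto q).comp hz
    have h2 := (h1.sub_const (f q)).abs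
    simpa using h2
  have hsum := fun f => summable_disj g hb hd (c f) (hc f)
  let P0 : C(K, ℝ) →ₗ[ℝ] C(K, ℝ) :=
    { toFun := fun f => ∑' k, c f k • g k
      map_add' := by
        intro f f'
        rw [← (hsum f).tsum_add (hsum f')]
        congr 1
        funext k
        rw [← add_smul]
        congr 1
        simp only [c, ContinuousMap.add_apply]
        split_ifs <;> ring
      map_smul' := by
        intro r f
        rw [RingHom.id_apply, ← (hsum f).tsum_const_smul]
        congr 1
        funext k
        rw [smul_smul]
        congr 1
        simp only [c, ContinuousMap.smul_apply, smul_eq_mul]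
        split_ifs <;> ring }
  have hP1 : ∀ f k y, g k y ≠ 0 → P0 f y = c f k * g k y := fun f k y hk =>
    tsum_disj_apply g hb hd (c f) (hc f) k y hk
  have hP2 : ∀ f y, (∀ k, g k y = 0) → P0 f y = 0 := fun f y hk =>
    tsum_disj_apply_zero g hb hd (c f) (hc f) y hk
  have hbd : ∀ f, ‖P0 f‖ ≤ 2 * ‖f‖ := by
    intro f
    rw [ContinuousMap.norm_le _ (by positivity)]
    intro y
    by_cases hk : ∃ k, g k y ≠ 0
    · obtain ⟨k, hk⟩ := hk
      rw [hP1 f k y hk, Real.norm_eq_abs, abs_mul]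
      have h1 : |c f k| ≤ 2 * ‖f‖ := by
        refine (hcabs f k).trans ((abs_sub _ _).trans ?_)
        have h2 := f.norm_coe_le_norm (z k)
        have h3 := f.norm_coe_le_norm q
        rw [Real.norm_eq_abs] at h2 h3
        linarith
      have h4 := mul_le_mul h1 (hb k y) (abs_nonneg _) (by positivity)
      linarith
    · push Not at hk
      rw [hP2 f y hk, norm_zero]
      positivity
  exact ⟨P0.mkContinuous 2 hbd, P0.mkContinuous_norm_le zero_le_two hbd, hP1, hP2⟩

theorem spaceable_case1 [T2Space K] (T : C(K, ℝ) →L[ℝ] C(K, ℝ)) (e : ℕ → C(K, ℝ)) (x : ℕ → K)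
    (M ε : ℝ) (hM : ∀ n, ‖e n‖ ≤ M) (hd : ∀ i j, i ≠ j → e i * e j = 0) (hx : ∀ n, e n (x n) = 0)
    (hε : 0 < ε) (hlow : ∀ n, ε ≤ |T (e n) (x n)|)
    (hno : ∀ A : Set ℕ, A.Infinite → ∀ q, ¬ Tendsto x (cofinite ⊓ 𝓟 A) (𝓝 q)) :
    Spaceable {T : C(K, ℝ) →L[ℝ] C(K, ℝ) | ¬ IsWeakMultiplier T} := by
  obtain ⟨B, g, hB, hb, hg, hgB⟩ := disjoint_bumps x Set.Infinite (step_case1 x hno)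
  refine spaceable_of_family e x M hM hd hx
    (fun j => (ContinuousLinearMap.mul ℝ C(K, ℝ) (g j)).comp T) ‖T‖ ?_ ?_ ε hε ?_
  · intro j
    refine ContinuousLinearMap.opNorm_le_bound _ T.opNorm_nonneg fun f => ?_
    have h0 : 0 ≤ ‖T‖ * ‖f‖ := mul_nonneg T.opNorm_nonneg (norm_nonneg _)
    rw [ContinuousMap.norm_le _ h0]
    intro y
    change |g j y * T f y| ≤ _
    rw [abs_mul]
    have h1 := mul_le_mul (hb j y) (abs_apply_le_opNorm T f y) (abs_nonneg _) zero_le_one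
    linarith
  · intro f i j hij
    change (g i * T f) * (g j * T f) = 0
    linear_combination (T f * T f) * hg i j hij
  · intro j
    refine Nat.frequently_atTop_iff_infinite.2 ((hB j).mono fun n hn => ?_)
    change ε ≤ |g j (x n) * T (e n) (x n)|
    rw [hgB j n hn, one_mul]
    exact hlow n

theorem spaceable_case2 [T2Space K] (T : C(K, ℝ) →L[ℝ] C(K, ℝ)) (e : ℕ → C(K, ℝ)) (x : ℕ → K)
    (M ε : ℝ) (hM : ∀ n, ‖e n‖ ≤ M) (hd : ∀ i j, i ≠ j → e i * e j = 0) (hx : ∀ n, e n (x n) = 0)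
    (hε : 0 < ε) (hlow : ∀ n, ε ≤ |T (e n) (x n)|) (hinj : Function.Injective x) (q : K)
    (hlim : Tendsto x cofinite (𝓝 q)) :
    Spaceable {T : C(K, ℝ) →L[ℝ] C(K, ℝ) | ¬ IsWeakMultiplier T} := by
  obtain ⟨B, g, hB, hb, hg, hgB⟩ := disjoint_bumps x Set.Nonempty (step_case2 x hinj q hlim)
  choose ν hν using hB
  have hone : ∀ k, g k (x (ν k)) = 1 := fun k => hgB k _ (hν k)
  have hνinj : Function.Injective ν := by
    intro k l hkl
    by_contra hne
    have h1 := disj_apply hg (x (ν k)) k l hne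
    rw [hone, hkl, hone] at h1
    norm_num at h1
  have hz : Tendsto (fun k => x (ν k)) cofinite (𝓝 q) := hlim.comp hνinj.tendsto_cofinite
  choose P hP2 hPk hP0 using exists_diagOp g hb hg (fun k => x (ν k)) q hz
  refine spaceable_of_family e x M hM hd hx (fun j => (P j).comp T) (2 * ‖T‖) ?_ ?_ (ε / 2)
    (by positivity) ?_
  · intro j
    refine ((P j).opNorm_comp_le T).trans ?_
    exact mul_le_mul_of_nonneg_right (hP2 j) T.opNorm_nonneg
  · intro f i j hij
    ext y
    change P i (T f) y * P j (T f) y = 0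
    by_cases hk : ∃ k, g k y ≠ 0
    · obtain ⟨k, hk⟩ := hk
      rw [hPk i _ k y hk, hPk j _ k y hk]
      by_cases h1 : k.unpair.1 = i
      · have h2 : ¬ k.unpair.1 = j := fun h => hij (h1.symm.trans h)
        rw [if_neg h2, zero_mul, mul_zero]
      · rw [if_neg h1, zero_mul, zero_mul]
    · push Not at hk
      rw [hP0 i _ y hk, zero_mul]
  · intro j
    have hpinj : Function.Injective fun m => ν (Nat.pair j m) := by
      intro a b hab
      have h1 := hνinj hab
      exact (Nat.pair_eq_pair.1 h1).2
    have hev : ∀ᶠ n in atTop, |T (e n) q| < ε / 2 := by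
      have h1 := functional_disj_tendsto (evOp T q) e M hM hd
      exact h1.abs.eventually (gt_mem_nhds (show |(0 : ℝ)| < ε / 2 by simpa using hε))
    have hfr : ∃ᶠ n in atTop, n ∈ Set.range fun m => ν (Nat.pair j m) :=
      Nat.frequently_atTop_iff_infinite.2 (Set.infinite_range_of_injective hpinj)
    refine (hfr.and_eventually hev).mono ?_
    rintro n ⟨⟨m, rfl⟩, hn⟩
    change ε / 2 ≤ |P j (T (e (ν (Nat.pair j m)))) (x (ν (Nat.pair j m)))|
    rw [hPk j _ (Nat.pair j m) _ (by rw [hone]; exact one_ne_zero), hone,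
      if_pos (by rw [Nat.unpair_pair]), mul_one]
    have h3 := abs_sub_abs_le_abs_sub (T (e (ν (Nat.pair j m))) (x (ν (Nat.pair j m))))
      (T (e (ν (Nat.pair j m))) q)
    have h4 := hlow (ν (Nat.pair j m))
    have h5 : |T (e (ν (Nat.pair j m))) q| < ε / 2 := hn
    linarith

theorem spaceable_of_not_weakMultiplier [T2Space K] (T : C(K, ℝ) →L[ℝ] C(K, ℝ))
    (hT : ¬ IsWeakMultiplier T) :
    Spaceable {T : C(K, ℝ) →L[ℝ] C(K, ℝ) | ¬ IsWeakMultiplier T} := by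
  obtain ⟨e, x, M, ε, hM, hd, hx, hε, hlow, hinj⟩ := exists_good_sequence hT
  by_cases hno : ∀ A : Set ℕ, A.Infinite → ∀ q, ¬ Tendsto x (cofinite ⊓ 𝓟 A) (𝓝 q)
  · exact spaceable_case1 T e x M ε hM hd hx hε hlow hno
  · push Not at hno
    obtain ⟨A, hA, q, hq⟩ := hno
    obtain ⟨σ, hσ, hσA⟩ := extraction_of_frequently_atTop (Nat.frequently_atTop_iff_infinite.2 hA)
    refine spaceable_case2 T (e ∘ σ) (x ∘ σ) M ε (fun n => hM _)
      (fun i j hij => hd _ _ (hσ.injective.ne hij)) (fun n => hx _) hε (fun n => hlow _)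
      (hinj.comp hσ.injective) q ?_
    refine hq.comp (tendsto_inf.2 ⟨hσ.injective.tendsto_cofinite, ?_⟩)
    exact tendsto_principal.2 (Eventually.of_forall hσA)

end SpacePart

/-- If there is an operator on `C(K, ℝ)` which is an isomorphism onto its range (injective and
bounded below) but not surjective, then the set of non weak multipliers is spaceable. -/
theorem spaceable_nonWeakMultipliers_of_into_isomorphism
    {K : Type*} [TopologicalSpace K] [CompactSpace K] [T2Space K]
    (h : ∃ T : C(K, ℝ) →L[ℝ] C(K, ℝ), Function.Injective T ∧
      (∃ c : ℝ, 0 < c ∧ ∀ f : C(K, ℝ), c * ‖f‖ ≤ ‖T f‖) ∧ ¬ Function.Surjective T) :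
    Spaceable {T : C(K, ℝ) →L[ℝ] C(K, ℝ) | ¬ IsWeakMultiplier T} := by
  obtain ⟨T, _, hb, hs⟩ := h
  exact spaceable_of_not_weakMultiplier T fun hT => hs (wm_bddBelow_surjective hT hb)
end
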